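/- arXiv:2301.09265 — 2 statements merged into one kernel-verified Lean document; each statement's English description precedes it below -/
import Mathlib

section
/- Let G be a finite group and p a prime. Suppose G is p-index extremal (G ∈ R(p)) and no p-element of G has nontrivial p-index (i.e., G ∈ R(p)**). Then in any composition series of G, at most one composition factor is a nonabelian simple group whose order is divisible by p. -/
/-- The index of an element `x` of a group `G`: the size of its conjugacy class,
`|x^G| = |G : C_G(x)|`. -/
noncomputable def classSize {G : Type*} [Group G] (x : G) : ℕ :=
  (Subgroup.centralizer {x}).index

/-- The `p`-index of `x`: the `p`-part of `|x^G|`. -/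
noncomputable def pIndex (p : ℕ) {G : Type*} [Group G] (x : G) : ℕ :=
  p ^ ((classSize x).factorization p)

/-- `G` is `p`-index extremal (`G ∈ R(p)`): the set `N(G)_p` of `p`-indices of elements of `G`
contains exactly one nontrivial element. -/
def IsPIndexExtremal (p : ℕ) (G : Type*) [Group G] : Prop :=
  ∃! a : ℕ, a ≠ 1 ∧ ∃ x : G, pIndex p x = a

/-- `x` is a `p`-element: its order is a power of `p`. -/
def IsPElement (p : ℕ) {G : Type*} [Group G] (x : G) : Prop :=
  ∃ k : ℕ, orderOf x = p ^ k

/-!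
The hypothesis says that the centralizer of every `p`-element contains a Sylow `p`-subgroup of `G`,
and that all nontrivial `p`-parts of class sizes coincide. Writing an element as a commuting product
of a `p`-element and a `p`-regular element, one gets a rigidity condition which passes to normal
subgroups of `p'`-index, to quotients by normal `p'`-subgroups and to quotients by central
`p`-subgroups. None of these reductions loses a nonabelian factor of order divisible by `p`, so in
a minimal counterexample `G` is generated by its `p`-elements (hence normal `p`-subgroups are
central) and has no nontrivial normal `p`- or `p'`-subgroup.

Let `M` be a minimal normal subgroup of such a `G`. A `p`-element centralizes a Sylow `p`-subgroup
of `G`, so it centralizes a nontrivial element of each simple factor of `M` and therefore normalizes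
that factor; as the `p`-elements generate `G`, the group `M` is simple. If `G ⧸ M` had a
`p`-regular element of nontrivial `p`-index, rigidity would force the `p`-regular elements of `M`
to form a normal `p'`-subgroup of `G`; that subgroup is trivial, so `M` would be a `p`-group. Hence
all `p`-regular elements of `G ⧸ M` have trivial `p`-index, which makes `G ⧸ M` a `p`-group, and
`M` is the only nonabelian factor.
-/

open Subgroup

section Elements

variable {G H : Type*} [Group G] [Group H] {p : ℕ} {x y : G}

theorem isPElement_iff_exists_pow_eq_one [Fact p.Prime] :
    IsPElement p x ↔ ∃ k : ℕ, x ^ p ^ k = 1 := by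
  rw [IsPElement, exists_orderOf_eq_prime_pow_iff]

theorem isPElement_of_mem_isPGroup [Fact p.Prime] {Q : Subgroup G} (hQ : IsPGroup p Q)
    (hx : x ∈ Q) : IsPElement p x := by
  simpa only [IsPElement, Subgroup.orderOf_mk] using IsPGroup.iff_orderOf.1 hQ ⟨x, hx⟩

theorem isPGroup_of_forall_isPElement [Fact p.Prime] {Q : Subgroup G}
    (h : ∀ x ∈ Q, IsPElement p x) : IsPGroup p Q :=
  IsPGroup.iff_orderOf.2 fun x => by simpa only [IsPElement, Subgroup.orderOf_coe] using h x x.2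

theorem isPElement_coe {K : Subgroup G} {x : K} : IsPElement p (x : G) ↔ IsPElement p x := by
  rw [IsPElement, IsPElement, Subgroup.orderOf_coe]

namespace IsPElement

theorem one : IsPElement p (1 : G) := ⟨0, by simp⟩

theorem map [Fact p.Prime] (hx : IsPElement p x) (f : G →* H) : IsPElement p (f x) := by
  obtain ⟨k, hk⟩ := isPElement_iff_exists_pow_eq_one.1 hx
  exact isPElement_iff_exists_pow_eq_one.2 ⟨k, by rw [← map_pow, hk, map_one]⟩

theorem conj (hx : IsPElement p x) (g : G) : IsPElement p (g * x * g⁻¹) := by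
  simpa only [IsPElement, ← MulAut.conj_apply, MulEquiv.orderOf_eq] using hx

theorem isPGroup_zpowers (hx : IsPElement p x) : IsPGroup p (zpowers x) := by
  obtain ⟨k, hk⟩ := hx
  exact IsPGroup.of_card (n := k) (by rw [Nat.card_zpowers, hk])

theorem inv (hx : IsPElement p x) : IsPElement p x⁻¹ := by
  simpa only [IsPElement, orderOf_inv] using hx

theorem mul [Fact p.Prime] (hx : IsPElement p x) (hy : IsPElement p y) (h : Commute x y) :
    IsPElement p (x * y) := by
  obtain ⟨k, hk⟩ := isPElement_iff_exists_pow_eq_one.1 hx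
  obtain ⟨l, hl⟩ := isPElement_iff_exists_pow_eq_one.1 hy
  refine isPElement_iff_exists_pow_eq_one.2 ⟨k + l, ?_⟩
  rw [h.mul_pow, pow_add, pow_mul, hk, one_pow, mul_comm (p ^ k), pow_mul, hl, one_pow, one_mul]

end IsPElement

/-- An element is `p`-regular if its order is finite and prime to `p` (a `p'`-element). -/
def IsPRegular (p : ℕ) {G : Type*} [Group G] (y : G) : Prop :=
  p.Coprime (orderOf y)

theorem isPRegular_of_not_dvd_card [Fact p.Prime] {K : Subgroup G} (hK : ¬ p ∣ Nat.card K)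
    (hx : x ∈ K) : IsPRegular p x :=
  ((Fact.out : p.Prime).coprime_iff_not_dvd.2 hK).coprime_dvd_right (K.orderOf_dvd_natCard hx)

theorem isPRegular_coe {K : Subgroup G} {x : K} : IsPRegular p (x : G) ↔ IsPRegular p x := by
  rw [IsPRegular, IsPRegular, Subgroup.orderOf_coe]

namespace IsPRegular

theorem one : IsPRegular p (1 : G) := by simp [IsPRegular]

theorem map (hx : IsPRegular p x) (f : G →* H) : IsPRegular p (f x) :=
  hx.coprime_dvd_right (orderOf_map_dvd f x)

theorem conj (hx : IsPRegular p x) (g : G) : IsPRegular p (g * x * g⁻¹) :=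
  hx.map (MulAut.conj g).toMonoidHom

theorem inv (hx : IsPRegular p x) : IsPRegular p x⁻¹ := by
  rwa [IsPRegular, orderOf_inv]

theorem mul (hx : IsPRegular p x) (hy : IsPRegular p y) (h : Commute x y) :
    IsPRegular p (x * y) :=
  (Nat.Coprime.mul_right hx hy).coprime_dvd_right h.orderOf_mul_dvd_mul_orderOf

theorem eq_one_of_isPElement (hx : IsPRegular p x) (hx' : IsPElement p x) : x = 1 := by
  obtain ⟨k, hk⟩ := hx'
  have hself : (p ^ k).Coprime (p ^ k) := (hk ▸ hx : p.Coprime (p ^ k)).pow_left k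
  rw [← orderOf_eq_one_iff, hk, ← Nat.coprime_self]
  exact hself

end IsPRegular

/-- The factorization `g = x * y` of an element into its `p`-part `x` and its `p`-regular part `y`,
which commute. -/
structure IsPDecomposition (p : ℕ) {G : Type*} [Group G] (g x y : G) : Prop where
  isPElement : IsPElement p x
  isPRegular : IsPRegular p y
  commute : Commute x y
  mul_eq : x * y = g

theorem IsPElement.isPDecomposition (hx : IsPElement p x) : IsPDecomposition p x x 1 :=
  ⟨hx, .one, .one_right x, mul_one x⟩

theorem IsPRegular.isPDecomposition (hy : IsPRegular p y) : IsPDecomposition p y 1 y :=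
  ⟨.one, hy, .one_left y, one_mul y⟩

theorem mem_centralizer_singleton_iff_commute : y ∈ centralizer {x} ↔ Commute y x :=
  mem_centralizer_singleton_iff

theorem commute_of_mem_zpowers {g h : G} (hx : x ∈ zpowers g) (hg : Commute h g) : Commute h x := by
  obtain ⟨k, rfl⟩ := hx
  exact hg.zpow_right k

theorem exists_isPDecomposition [Finite G] [Fact p.Prime] (g : G) :
    ∃ x y, IsPDecomposition p g x y := by
  obtain ⟨k, n, hpn, hkn⟩ := Nat.exists_eq_pow_mul_and_not_dvd (orderOf_pos g).ne' p
    (Fact.out : p.Prime).ne_one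
  have hn : p.Coprime n := (Nat.Prime.coprime_iff_not_dvd Fact.out).2 hpn
  obtain ⟨u, v, huv⟩ := Nat.isCoprime_iff_coprime.2 (hn.pow_left k)
  have hg : g ^ (((p ^ k : ℕ) : ℤ) * n) = 1 := by
    rw [← Nat.cast_mul, ← hkn, zpow_natCast, pow_orderOf_eq_one]
  refine ⟨g ^ (v * n), g ^ (u * (p ^ k : ℕ)), ?_, ?_, (Commute.refl g).zpow_zpow _ _, ?_⟩
  · refine isPElement_iff_exists_pow_eq_one.2 ⟨k, ?_⟩
    rw [← zpow_natCast, ← zpow_mul, mul_assoc, mul_comm, mul_comm (n : ℤ), zpow_mul, hg, one_zpow]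
  · refine hn.coprime_dvd_right (orderOf_dvd_of_pow_eq_one ?_)
    rw [← zpow_natCast, ← zpow_mul, mul_assoc, mul_comm, zpow_mul, hg, one_zpow]
  · rw [← zpow_add, add_comm, huv, zpow_one]

namespace IsPDecomposition

variable {g x' y' : G}

theorem map [Fact p.Prime] (h : IsPDecomposition p g x y) (f : G →* H) :
    IsPDecomposition p (f g) (f x) (f y) :=
  ⟨h.isPElement.map f, h.isPRegular.map f, h.commute.map f, by rw [← map_mul, h.mul_eq]⟩

theorem coprime_orderOf (h : IsPDecomposition p g x y) : (orderOf x).Coprime (orderOf y) := by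
  obtain ⟨k, hk⟩ := h.isPElement
  exact hk ▸ Nat.Coprime.pow_left k h.isPRegular

theorem left_mem_zpowers (h : IsPDecomposition p g x y) : x ∈ zpowers g := by
  have hpow : g ^ orderOf y = x ^ orderOf y := by
    rw [← h.mul_eq, h.commute.mul_pow, pow_orderOf_eq_one, mul_one]
  exact zpowers_le.2 (hpow ▸ npow_mem_zpowers g _) (mem_zpowers_pow_iff.2 h.coprime_orderOf.symm)

theorem right_mem_zpowers (h : IsPDecomposition p g x y) : y ∈ zpowers g := by
  have hpow : g ^ orderOf x = y ^ orderOf x := by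
    rw [← h.mul_eq, h.commute.mul_pow, pow_orderOf_eq_one, one_mul]
  exact zpowers_le.2 (hpow ▸ npow_mem_zpowers g _) (mem_zpowers_pow_iff.2 h.coprime_orderOf)

theorem centralizer_eq (h : IsPDecomposition p g x y) :
    centralizer {g} = centralizer {x} ⊓ centralizer {y} := by
  ext c
  simp only [mem_inf, mem_centralizer_singleton_iff_commute]
  refine ⟨fun hc => ⟨commute_of_mem_zpowers h.left_mem_zpowers hc,
    commute_of_mem_zpowers h.right_mem_zpowers hc⟩, fun hc => ?_⟩
  exact h.mul_eq ▸ hc.1.mul_right hc.2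

theorem unique [Fact p.Prime] (h : IsPDecomposition p g x y) (h' : IsPDecomposition p g x' y') :
    x = x' ∧ y = y' := by
  have hx' : Commute x' g := h'.mul_eq ▸ (Commute.refl x').mul_right h'.commute
  have hy' : Commute y' g := h'.mul_eq ▸ h'.commute.symm.mul_right (Commute.refl y')
  have heq : x'⁻¹ * x = y' * y⁻¹ := by
    rw [eq_mul_inv_iff_mul_eq, mul_assoc, h.mul_eq, ← h'.mul_eq, inv_mul_cancel_left]
  have hone : x'⁻¹ * x = 1 := IsPRegular.eq_one_of_isPElement
    (heq ▸ h'.isPRegular.mul h.isPRegular.inv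
      (commute_of_mem_zpowers h.right_mem_zpowers hy').inv_right)
    (h'.isPElement.inv.mul h.isPElement (commute_of_mem_zpowers h.left_mem_zpowers hx').inv_left)
  exact ⟨(inv_mul_eq_one.1 hone).symm, (mul_inv_eq_one.1 (heq ▸ hone)).symm⟩

theorem exists_lift [Finite G] [Fact p.Prime] {f : G →* H} {g : G} {x y : H}
    (h : IsPDecomposition p (f g) x y) :
    ∃ x₀ y₀, IsPDecomposition p g x₀ y₀ ∧ f x₀ = x ∧ f y₀ = y := by
  obtain ⟨x₀, y₀, h₀⟩ := exists_isPDecomposition (p := p) g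
  exact ⟨x₀, y₀, h₀, (h₀.map f).unique h⟩

end IsPDecomposition

end Elements

section Sylow

variable {G : Type*} [Group G] {p : ℕ} {C H M P Q R : Subgroup G}

theorem relIndex_dvd_index_of_normal_right [Finite G] (P M : Subgroup G) [M.Normal] :
    P.relIndex M ∣ P.index := by
  have hMP : M.relIndex P * P.index = P.relIndex M * M.index := by
    rw [← inf_relIndex_right M P, relIndex_mul_index inf_le_right, ← inf_relIndex_right P M,
      relIndex_mul_index inf_le_right, inf_comm]
  have hpos : 0 < M.relIndex P := Nat.pos_of_ne_zero (index_ne_zero_of_finite (H := M.subgroupOf P))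
  refine Nat.dvd_of_mul_dvd_mul_left hpos ?_
  rw [hMP, mul_comm]
  exact mul_dvd_mul_left _ (relIndex_dvd_index_of_normal M P)

theorem relIndex_dvd_relIndex_of_le_normalizer [Finite G] (hMH : M ≤ H)
    (hHM : H ≤ normalizer (M : Set G)) : P.relIndex M ∣ P.relIndex H := by
  have : (M.subgroupOf H).Normal := (normal_subgroupOf_iff_le_normalizer hMH).2 hHM
  rw [← relIndex_subgroupOf hMH]
  exact relIndex_dvd_index_of_normal_right _ _

theorem exists_forall_conj_mem_of_not_dvd_relIndex [Fact p.Prime] (hR : IsPGroup p R)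
    (hRM : R ≤ M) (hC : ¬ p ∣ C.relIndex M) : ∃ m ∈ M, ∀ r ∈ R, m * r * m⁻¹ ∈ C := by
  have hRM' : IsPGroup p (R.subgroupOf M) := hR.of_equiv (subgroupOfEquivOfLe hRM).symm
  obtain ⟨c, hc⟩ := hRM'.nonempty_fixed_point_of_prime_not_dvd_card (M ⧸ C.subgroupOf M) hC
  obtain ⟨m, rfl⟩ := QuotientGroup.mk_surjective c
  refine ⟨m⁻¹, inv_mem m.2, fun r hr => ?_⟩
  have hfix := QuotientGroup.eq.1 (hc ⟨⟨r⁻¹, hRM (inv_mem hr)⟩, mem_subgroupOf.2 (inv_mem hr)⟩)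
  simpa [mem_subgroupOf, mul_assoc] using hfix

theorem le_of_isPGroup_of_not_dvd_relIndex [Finite G] [Fact p.Prime] (hR : IsPGroup p R)
    (hC : ¬ p ∣ C.relIndex R) : R ≤ C := by
  obtain ⟨n, hn⟩ := hR.index (C.subgroupOf R)
  have hn0 : n = 0 := by_contra fun h => hC (by rw [relIndex, hn]; exact dvd_pow_self p h)
  exact relIndex_eq_one.1 (by rw [relIndex, hn, hn0, pow_zero])

theorem exists_mem_le_centralizer_of_not_dvd_card [Fact p.Prime] (hR : IsPGroup p R) {X : Set G}
    (hRX : ∀ r ∈ R, ∀ x ∈ X, r * x * r⁻¹ ∈ X) (hX : ¬ p ∣ Nat.card X) :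
    ∃ x ∈ X, R ≤ centralizer {x} := by
  let _ : MulAction R X :=
    { smul r x := ⟨r * x * r⁻¹, hRX r r.2 x x.2⟩
      one_smul x := Subtype.ext (by change (1 : G) * x * (1 : G)⁻¹ = x; group)
      mul_smul r s x := Subtype.ext (by
        change (r * s : G) * x * (r * s : G)⁻¹ = r * (s * x * (s : G)⁻¹) * (r : G)⁻¹; group) }
  obtain ⟨x, hx⟩ := hR.nonempty_fixed_point_of_prime_not_dvd_card X hX
  exact ⟨x, x.2, fun r hr => mem_centralizer_singleton_iff.2
    (mul_inv_eq_iff_eq_mul.1 (congrArg Subtype.val (hx ⟨r, hr⟩)))⟩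

/-- `Q` is a Sylow `p`-subgroup of the subgroup `M`, where both are regarded as subgroups of the
ambient group. -/
structure IsSylowIn (p : ℕ) {G : Type*} [Group G] (Q M : Subgroup G) : Prop where
  le : Q ≤ M
  isPGroup : IsPGroup p Q
  not_dvd_relIndex : ¬ p ∣ Q.relIndex M

theorem exists_isSylowIn [Finite G] (p : ℕ) [Fact p.Prime] (M : Subgroup G) :
    ∃ Q, IsSylowIn p Q M := by
  obtain ⟨P⟩ : Nonempty (Sylow p M) := inferInstance
  refine ⟨(P : Subgroup M).map M.subtype, map_subtype_le _, P.2.map _, ?_⟩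
  rw [relIndex, ← comap_subtype, comap_map_eq_self_of_injective M.subtype_injective]
  exact P.not_dvd_index

namespace IsSylowIn

theorem inf [Finite G] (hP : IsSylowIn p P H) (hMH : M ≤ H) (hHM : H ≤ normalizer (M : Set G)) :
    IsSylowIn p (P ⊓ M) M where
  le := inf_le_right
  isPGroup := hP.isPGroup.to_le inf_le_left
  not_dvd_relIndex h := hP.not_dvd_relIndex
    ((inf_relIndex_right P M ▸ h).trans (relIndex_dvd_relIndex_of_le_normalizer hMH hHM))

theorem not_dvd_relIndex_inf_centralizer [Finite G] (hQ : IsSylowIn p Q M) :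
    ¬ p ∣ Q.relIndex (M ⊓ centralizer (Q : Set G)) := fun h => by
  have hnorm : Q ⊔ M ⊓ centralizer (Q : Set G) ≤
      normalizer ((M ⊓ centralizer (Q : Set G) : Subgroup G) : Set G) :=
    sup_le ((le_centralizer_iff.1 inf_le_right).trans (centralizer_le_normalizer _)) le_normalizer
  refine hQ.not_dvd_relIndex
    ((h.trans (relIndex_dvd_relIndex_of_le_normalizer le_sup_right hnorm)).trans ?_)
  exact ⟨_, (relIndex_mul_relIndex Q _ M le_sup_left (sup_le hQ.le inf_le_left)).symm⟩

theorem le_of_le [Finite G] [Fact p.Prime] (hQ : IsSylowIn p Q M) (hQR : Q ≤ R) (hRM : R ≤ M)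
    (hR : IsPGroup p R) : R ≤ Q :=
  le_of_isPGroup_of_not_dvd_relIndex hR fun h => hQ.not_dvd_relIndex
    (h.trans ⟨_, (relIndex_mul_relIndex Q R M hQR hRM).symm⟩)

theorem mem_of_mem_normalizer [Finite G] [Fact p.Prime] (hQ : IsSylowIn p Q M) {x : G}
    (hx : IsPElement p x) (hxM : x ∈ M) (hxQ : x ∈ normalizer (Q : Set G)) : x ∈ Q :=
  hQ.le_of_le le_sup_left (sup_le hQ.le (zpowers_le.2 hxM))
    (hQ.isPGroup.to_sup_of_normal_left' hx.isPGroup_zpowers (zpowers_le.2 hxQ))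
    (mem_sup_right (mem_zpowers x))

theorem exists_le_forall_isPRegular_mem [Finite G] [Fact p.Prime] (hQ : IsSylowIn p Q M)
    (h : M ⊓ normalizer (Q : Set G) ≤ centralizer (Q : Set G)) :
    ∃ K ≤ M, ¬ p ∣ Nat.card K ∧ ∀ x ∈ M, IsPRegular p x → x ∈ K := by
  have hQM : IsPGroup p (Q.subgroupOf M) := hQ.isPGroup.of_equiv (subgroupOfEquivOfLe hQ.le).symm
  let S : Sylow p M := hQM.toSylow hQ.not_dvd_relIndex
  have hS : normalizer (S : Set M) ≤ centralizer (S : Set M) := fun n hn q hq => by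
    have hnQ : (n : G) ∈ normalizer (Q : Set G) := mem_normalizer_iff.2 fun r =>
      ⟨fun hr => (mem_normalizer_iff (H := (S : Subgroup M)).1 hn ⟨r, hQ.le hr⟩).1 hr, fun hr => by
        have hrM : r ∈ M := by
          simpa [mul_assoc] using mul_mem (mul_mem (inv_mem n.2) (hQ.le hr)) n.2
        exact (mem_normalizer_iff (H := (S : Subgroup M)).1 hn ⟨r, hrM⟩).2 hr⟩
    exact Subtype.ext (h ⟨n.2, hnQ⟩ q hq)
  refine ⟨(MonoidHom.transferSylow S hS).ker.map M.subtype, map_subtype_le _, ?_,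
    fun x hx hpx => ?_⟩
  · rw [card_map_of_injective M.subtype_injective]
    exact MonoidHom.not_dvd_card_ker_transferSylow S hS
  · refine ⟨⟨x, hx⟩, (MonoidHom.mem_ker).2 ?_, rfl⟩
    have hreg : IsPRegular p (⟨x, hx⟩ : M) := isPRegular_coe.1 hpx
    exact (hreg.map _).eq_one_of_isPElement (IsPGroup.iff_orderOf.1 S.2 _)

end IsSylowIn

end Sylow

section Counting

variable {G : Type*} [Group G]

-- `M` acts by conjugation on the coset `cM`, every orbit meets `cM ∩ D`, and the induced map from
-- `M ×_{M ∩ D} (cM ∩ D)` to `cM` is a surjection between sets of the same size. After choosing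
-- `t g ∈ M` conjugating `c * g` into `D`, this is the bijectivity of `Φ`.
theorem mem_of_conj_mem_of_forall_exists_conj_mem [Finite G] {M D : Subgroup G} [hM : M.Normal]
    {c m : G} (hc : c ∈ D) (hD : ∀ x, c⁻¹ * x ∈ M → ∃ m ∈ M, m * x * m⁻¹ ∈ D) (hm : m ∈ M)
    (hmc : m * c * m⁻¹ ∈ D) : m ∈ D := by
  have hcoset : ∀ g ∈ M, ∀ n ∈ M, c⁻¹ * (n * (c * g) * n⁻¹) ∈ M := fun g hg n hn => by
    simpa [mul_assoc] using mul_mem (hM.conj_mem n hn c⁻¹) (mul_mem hg (inv_mem hn))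
  have hBD : ∀ b : ↥(M ⊓ D), (b : G) ∈ D := fun b => b.2.2
  choose t htM htD using fun g : M => hD (c * g) (by simp)
  let Φ : M × ↥(M ⊓ D) → M × ↥(M ⊓ D) := fun gb =>
    (⟨gb.2 * t gb.1, mul_mem gb.2.2.1 (htM _)⟩,
      ⟨c⁻¹ * (gb.2 * t gb.1 * (c * gb.1) * (gb.2 * t gb.1)⁻¹),
        mem_inf.2 ⟨hcoset _ gb.1.2 _ (mul_mem gb.2.2.1 (htM _)), mul_mem (inv_mem hc) (by
          simpa [mul_assoc] using
            mul_mem (mul_mem (hBD gb.2) (htD gb.1)) (inv_mem (hBD gb.2)))⟩⟩)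
  have hΦ : ∀ gb, ((Φ gb).1 : G)⁻¹ * (c * (Φ gb).2) * (Φ gb).1 = c * gb.1 := fun gb => by
    simp only [Φ]; group
  have hinj : Function.Injective Φ := by
    rintro ⟨g, b⟩ ⟨g', b'⟩ h
    obtain rfl : g = g' := Subtype.ext (mul_left_cancel ((hΦ (g, b)).symm.trans (h ▸ hΦ (g', b'))))
    exact Prod.ext rfl (Subtype.ext (mul_right_cancel (congrArg (fun z => (z.1 : G)) h)))
  have hfibre : ∀ n ∈ M, n * c * n⁻¹ ∈ D → ∃ b ∈ D, b * t 1 = n := fun n hn hnc => by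
    obtain ⟨⟨g, b⟩, h⟩ := Finite.surjective_of_injective hinj (⟨n, hn⟩, ⟨c⁻¹ * (n * c * n⁻¹),
      mem_inf.2 ⟨by simpa using hcoset 1 (one_mem M) n hn, mul_mem (inv_mem hc) hnc⟩⟩)
    have hg := hΦ (g, b)
    rw [h] at hg
    obtain rfl : g = 1 := Subtype.ext (mul_left_cancel (a := c) (by simp [← hg, mul_assoc]))
    exact ⟨b, hBD b, congrArg (fun z => (z.1 : G)) h⟩
  obtain ⟨b, hb, hbm⟩ := hfibre m hm hmc
  obtain ⟨b', hb', hb1⟩ := hfibre 1 (one_mem M) (by simpa using hc)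
  rw [← hbm, ← inv_inv (t 1), ← eq_inv_of_mul_eq_one_left hb1]
  exact mul_mem hb (inv_mem hb')

end Counting

section PIndex

variable {G H : Type*} [Group G] [Group H] {p : ℕ} {f : G →* H}

theorem centralizer_singleton_le_comap (f : G →* H) (x : G) :
    centralizer {x} ≤ (centralizer {f x}).comap f := fun _ hg =>
  mem_centralizer_singleton_iff_commute.2 ((mem_centralizer_singleton_iff_commute.1 hg).map f)

theorem pIndex_eq_ordProj_index_comap (hf : Function.Surjective f) (z : H) :
    pIndex p z = ordProj[p] ((centralizer {z}).comap f).index := by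
  rw [index_comap_of_surjective _ hf, pIndex, classSize]

variable [Finite G]

theorem classSize_ne_zero (x : G) : classSize x ≠ 0 := index_ne_zero_of_finite

theorem ordProj_index_dvd_of_le {C K : Subgroup G} (hCK : C ≤ K) :
    ordProj[p] K.index ∣ ordProj[p] C.index :=
  Nat.ordProj_dvd_ordProj_of_dvd index_ne_zero_of_finite (index_dvd_of_le hCK) p

theorem IsPDecomposition.pIndex_right_dvd {g x y : G} (h : IsPDecomposition p g x y) :
    pIndex p y ∣ pIndex p g :=
  ordProj_index_dvd_of_le (h.centralizer_eq.le.trans inf_le_right)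

theorem pIndex_map_dvd (hf : Function.Surjective f) (x : G) : pIndex p (f x) ∣ pIndex p x := by
  rw [pIndex_eq_ordProj_index_comap hf]
  exact ordProj_index_dvd_of_le (centralizer_singleton_le_comap f x)

variable [Fact p.Prime]

theorem pIndex_eq_one_iff {x : G} : pIndex p x = 1 ↔ ¬ p ∣ classSize x := by
  have hp : p.Prime := Fact.out
  rw [pIndex, Nat.pow_eq_one, Nat.factorization_eq_zero_iff]
  simp [hp, hp.ne_one, classSize_ne_zero]

theorem ordProj_index_eq_iff {C K : Subgroup G} (hCK : C ≤ K) :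
    ordProj[p] C.index = ordProj[p] K.index ↔ ¬ p ∣ C.relIndex K := by
  have hp : p.Prime := Fact.out
  have hrel : C.relIndex K ≠ 0 := index_ne_zero_of_finite (H := C.subgroupOf K)
  rw [Nat.pow_right_inj hp.one_lt, ← relIndex_mul_index hCK,
    Nat.factorization_mul hrel index_ne_zero_of_finite, Finsupp.add_apply, Nat.add_eq_right,
    Nat.factorization_eq_zero_iff]
  simp [hp, hrel]

theorem pIndex_coe {N : Subgroup G} [N.Normal] (hN : ¬ p ∣ N.index) (x : N) :
    pIndex p (x : G) = pIndex p x := by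
  have hcent : centralizer {x} = (centralizer {(x : G)}).subgroupOf N := by
    ext g
    rw [mem_subgroupOf, mem_centralizer_singleton_iff, mem_centralizer_singleton_iff]
    exact Subtype.ext_iff
  have hcard : ordProj[p] (centralizer {(x : G)} ⊓ N).index = pIndex p (x : G) :=
    (ordProj_index_eq_iff inf_le_left).2 fun h => hN
      ((inf_relIndex_left _ N ▸ h).trans (relIndex_dvd_index_of_normal N _))
  have hN1 : ordProj[p] N.index = 1 := by
    rw [Nat.factorization_eq_zero_of_not_dvd hN, pow_zero]
  have hrel : (centralizer {(x : G)}).relIndex N ≠ 0 := index_ne_zero_of_finite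
  rw [← hcard, ← relIndex_mul_index inf_le_right, inf_relIndex_right,
    Nat.ordProj_mul p hrel index_ne_zero_of_finite, hN1, mul_one, pIndex, classSize, hcent,
    relIndex]

theorem pIndex_map_eq_iff (hf : Function.Surjective f) {x : G} :
    pIndex p x = pIndex p (f x) ↔
      ¬ p ∣ (centralizer {x}).relIndex ((centralizer {f x}).comap f) := by
  rw [pIndex_eq_ordProj_index_comap hf]
  exact ordProj_index_eq_iff (centralizer_singleton_le_comap f x)

theorem exists_mem_pIndex_eq_of_not_dvd_card (hf : Function.Surjective f) {z : H} {T : Subgroup G}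
    (hT : IsSylowIn p T ((centralizer {z}).comap f)) {X : Set G} (hXz : ∀ x ∈ X, f x = z)
    (hTX : ∀ t ∈ T, ∀ x ∈ X, t * x * t⁻¹ ∈ X) (hX : ¬ p ∣ Nat.card X) :
    ∃ g ∈ X, T ≤ centralizer {g} ∧ pIndex p g = pIndex p z := by
  obtain ⟨g, hgX, hTg⟩ := exists_mem_le_centralizer_of_not_dvd_card hT.isPGroup hTX hX
  obtain rfl := hXz g hgX
  refine ⟨g, hgX, hTg, (pIndex_map_eq_iff hf).2 fun h => hT.not_dvd_relIndex ?_⟩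
  exact h.trans (relIndex_dvd_of_le_left _ hTg)

end PIndex

section Rigid

/-- The two consequences of belonging to `R(p)**` that are inherited by the groups met in the
induction: `p`-elements have trivial `p`-index, and the `p`-index of an element whose `p`-regular
part has nontrivial `p`-index is the constant `a`. -/
structure IsPIndexRigid (p a : ℕ) (G : Type*) [Group G] : Prop where
  pIndex_eq_one : ∀ {x : G}, IsPElement p x → pIndex p x = 1
  pIndex_eq : ∀ {g x y : G}, IsPDecomposition p g x y → pIndex p y ≠ 1 → pIndex p g = a

namespace IsPIndexRigid

variable {G H : Type*} [Group G] [Group H] {p a : ℕ} {f : G →* H}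

theorem pIndex_eq_of_isPRegular (hG : IsPIndexRigid p a G) {y : G} (hy : IsPRegular p y)
    (hy1 : pIndex p y ≠ 1) : pIndex p y = a :=
  hG.pIndex_eq hy.isPDecomposition hy1

variable [Finite G]

theorem of_forall_pIndex_eq (hone : ∀ x : G, IsPElement p x → pIndex p x = 1)
    (ha : ∀ g : G, pIndex p g ≠ 1 → pIndex p g = a) : IsPIndexRigid p a G where
  pIndex_eq_one := hone _
  pIndex_eq h hy := ha _ fun hg => hy (Nat.dvd_one.1 (hg ▸ h.pIndex_right_dvd))

variable [Fact p.Prime]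

theorem subgroup (hG : IsPIndexRigid p a G) {N : Subgroup G} [N.Normal] (hN : ¬ p ∣ N.index) :
    IsPIndexRigid p a N where
  pIndex_eq_one hx := by
    rw [← pIndex_coe hN]
    exact hG.pIndex_eq_one (isPElement_coe.2 hx)
  pIndex_eq h hy := by
    rw [← pIndex_coe hN] at hy ⊢
    exact hG.pIndex_eq (h.map N.subtype) hy

theorem map_pIndex_eq_one (hG : IsPIndexRigid p a G) (hf : Function.Surjective f) {x : H}
    (hx : IsPElement p x) : pIndex p x = 1 := by
  obtain ⟨g, rfl⟩ := hf x
  obtain ⟨x₀, _, h₀, hx₀, -⟩ := hx.isPDecomposition.exists_lift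
  rw [← hx₀, ← Nat.dvd_one, ← hG.pIndex_eq_one h₀.isPElement]
  exact pIndex_map_dvd hf x₀

theorem map_of_not_dvd_card_ker (hG : IsPIndexRigid p a G) (hf : Function.Surjective f)
    (hker : ¬ p ∣ Nat.card f.ker) : IsPIndexRigid p a H where
  pIndex_eq_one := hG.map_pIndex_eq_one hf
  pIndex_eq {z x y} h hy := by
    obtain ⟨T, hT⟩ := exists_isSylowIn p ((centralizer {z}).comap f)
    obtain ⟨g, rfl, -, hgz⟩ := exists_mem_pIndex_eq_of_not_dvd_card hf hT (X := f ⁻¹' {z})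
      (fun _ hx => hx) (fun t ht x hx => by
        have htz : Commute (f t) z := mem_centralizer_singleton_iff_commute.1 (hT.le ht)
        rw [Set.mem_preimage, Set.mem_singleton_iff] at hx ⊢
        rw [map_mul, map_mul, map_inv, hx, htz.eq, mul_inv_cancel_right])
      (by rwa [Nat.card_congr (MonoidHom.fiberEquivKerOfSurjective hf z)])
    obtain ⟨x₀, y₀, h₀, rfl, rfl⟩ := h.exists_lift
    rw [← hgz]
    exact hG.pIndex_eq h₀ fun h1 => hy (Nat.dvd_one.1 (h1 ▸ pIndex_map_dvd hf y₀))

theorem map_of_ker_le_center (hG : IsPIndexRigid p a G) (hf : Function.Surjective f)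
    (hker : IsPGroup p f.ker) (hcenter : f.ker ≤ center G) : IsPIndexRigid p a H where
  pIndex_eq_one := hG.map_pIndex_eq_one hf
  pIndex_eq {z x y} h hy := by
    have : Finite H := .of_surjective f hf
    obtain ⟨g, rfl⟩ := hf z
    obtain ⟨x₀, y₀, h₀, rfl, rfl⟩ := h.exists_lift
    have hcent : (centralizer {f y₀}).comap f ≤ centralizer {y₀} := fun w hw => by
      have hfw : Commute (f w) (f y₀) := mem_centralizer_singleton_iff_commute.1 hw
      have hk : w * y₀ * w⁻¹ * y₀⁻¹ ∈ f.ker := by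
        simp [MonoidHom.mem_ker, hfw.eq]
      have hdecomp : IsPDecomposition p (w * y₀ * w⁻¹) (w * y₀ * w⁻¹ * y₀⁻¹) y₀ :=
        ⟨isPElement_of_mem_isPGroup hker hk, h₀.isPRegular,
          (mem_center_iff.1 (hcenter hk) y₀).symm, inv_mul_cancel_right _ _⟩
      have hconj : y₀ = w * y₀ * w⁻¹ :=
        (hdecomp.unique (h₀.isPRegular.conj w).isPDecomposition).2
      exact mem_centralizer_singleton_iff.2 (eq_mul_inv_iff_mul_eq.1 hconj).symm
    have hy₀ : pIndex p y₀ = pIndex p (f y₀) := (pIndex_map_eq_iff hf).2 (by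
      rw [relIndex_eq_one.2 hcent]
      exact (Fact.out : p.Prime).not_dvd_one)
    have hg : pIndex p g = a := hG.pIndex_eq h₀ (hy₀ ▸ hy)
    refine Nat.dvd_antisymm (hg ▸ pIndex_map_dvd hf g) ?_
    rw [← hG.pIndex_eq_of_isPRegular h₀.isPRegular (hy₀ ▸ hy), hy₀]
    exact h.pIndex_right_dvd

end IsPIndexRigid

end Rigid

section Residual

variable {G H : Type*} [Group G] [Group H] {p : ℕ}

/-- The subgroup `O^{p'}(G)` generated by the `p`-elements of `G`. -/
def pResidual (p : ℕ) (G : Type*) [Group G] : Subgroup G := closure {x | IsPElement p x}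

instance normal_pResidual : (pResidual p G).Normal where
  conj_mem x hx g := by
    refine (map_le_iff_le_comap (f := (MulAut.conj g).toMonoidHom)).2 ?_ (mem_map_of_mem _ hx)
    exact (closure_le _).2 fun y hy => subset_closure (hy.conj g)

theorem eq_top_of_pResidual_eq_top (hG : pResidual p G = ⊤) {N : Subgroup G}
    (hN : ∀ x, IsPElement p x → x ∈ N) : N = ⊤ :=
  top_le_iff.1 (hG ▸ (closure_le N).2 hN)

variable [Fact p.Prime]

theorem not_dvd_index_pResidual [Finite G] : ¬ p ∣ (pResidual p G).index := fun h => by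
  obtain ⟨P⟩ : Nonempty (Sylow p G) := inferInstance
  refine P.not_dvd_index (h.trans (index_dvd_of_le fun x hx => subset_closure ?_))
  exact isPElement_of_mem_isPGroup P.2 hx

theorem pResidual_eq_top_of_surjective {f : G →* H} (hf : Function.Surjective f)
    (hG : pResidual p G = ⊤) : pResidual p H = ⊤ := by
  have h : (pResidual p H).comap f = ⊤ :=
    eq_top_of_pResidual_eq_top hG fun x hx => subset_closure (hx.map f)
  rw [← map_comap_eq_self_of_surjective hf (pResidual p H), h, map_top_of_surjective f hf]

end Residual

section Centralizer

variable {G : Type*} [Group G]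

theorem sup_centralizer_le_normalizer (Q : Subgroup G) :
    Q ⊔ centralizer (Q : Set G) ≤ normalizer (Q : Set G) :=
  sup_le le_normalizer (centralizer_le_normalizer _)

theorem inv_mul_mul_mem_centralizer {Q : Subgroup G} {m x : G}
    (h : ∀ q ∈ Q, m * q * m⁻¹ ∈ centralizer {x}) : m⁻¹ * x * m ∈ centralizer (Q : Set G) :=
  fun q hq => by
    have hcomm : Commute (m * q * m⁻¹) x := mem_centralizer_singleton_iff_commute.1 (h q hq)
    simpa [mul_assoc] using ((Commute.conj_iff m⁻¹).2 hcomm).eq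

theorem conj_mem_centralizer_of_mem_normalizer {Q : Subgroup G} {n c : G}
    (hn : n ∈ normalizer (Q : Set G)) (hc : c ∈ centralizer (Q : Set G)) :
    n * c * n⁻¹ ∈ centralizer (Q : Set G) := by
  simpa using inv_mul_mul_mem_centralizer (m := n⁻¹) fun q hq =>
    mem_centralizer_singleton_iff.2 (hc _ ((mem_normalizer_iff.1 (inv_mem hn) q).1 hq))

end Centralizer

section Complement

variable {G H : Type*} [Group G] [Group H] [Finite G] {p : ℕ} [Fact p.Prime] {f : G →* H}
  {Q : Subgroup G} {c : G}

theorem sup_centralizer_eq_top_of_isPGroup (hone : ∀ x : G, IsPElement p x → pIndex p x = 1)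
    (hG : pResidual p G = ⊤) {M : Subgroup G} [M.Normal] (hQ : IsPGroup p Q) (hQM : Q ≤ M) :
    M ⊔ centralizer (Q : Set G) = ⊤ := by
  refine eq_top_of_pResidual_eq_top hG fun x hx => ?_
  obtain ⟨m, hm, hmQ⟩ := exists_forall_conj_mem_of_not_dvd_relIndex hQ hQM fun h =>
    pIndex_eq_one_iff.1 (hone x hx) (h.trans (relIndex_dvd_index_of_normal_right _ M))
  have hm' : m ∈ M ⊔ centralizer (Q : Set G) := mem_sup_left hm
  simpa [mul_assoc] using
    mul_mem (mul_mem hm' (mem_sup_right (inv_mul_mul_mem_centralizer hmQ))) (inv_mem hm')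

theorem exists_isPRegular_mem_centralizer_of_sup_eq_top (h : f.ker ⊔ centralizer (Q : Set G) = ⊤)
    (hf : Function.Surjective f) {z : H} (hz : IsPRegular p z) :
    ∃ c, IsPRegular p c ∧ c ∈ centralizer (Q : Set G) ∧ f c = z := by
  obtain ⟨g, rfl⟩ := hf z
  obtain ⟨m, hm, d, hd, rfl⟩ := mem_sup_of_normal_left.1 (h ▸ mem_top g)
  rw [map_mul, (MonoidHom.mem_ker).1 hm, one_mul] at hz ⊢
  obtain ⟨_, c, hc, -, hcd⟩ := hz.isPDecomposition.exists_lift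
  exact ⟨c, hc.isPRegular, zpowers_le.2 hd hc.right_mem_zpowers, hcd⟩

theorem not_dvd_card_isPRegular_fiber (hQ : IsSylowIn p Q f.ker) (hc : IsPRegular p c)
    (hcQ : c ∈ centralizer (Q : Set G)) :
    ¬ p ∣ Nat.card {y : G | IsPRegular p y ∧ y ∈ centralizer (Q : Set G) ∧ f y = f c} := by
  set X := {y : G | IsPRegular p y ∧ y ∈ centralizer (Q : Set G) ∧ f y = f c}
  set A := f.ker ⊓ centralizer (Q : Set G)
  have hZ : ∀ z : ↥(Q ⊓ A), (z : G) ∈ Q ∧ f z = 1 ∧ (z : G) ∈ centralizer (Q : Set G) :=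
    fun z => ⟨z.2.1, z.2.2.1, z.2.2.2⟩
  let Φ : X × ↥(Q ⊓ A) → A := fun yz => ⟨c⁻¹ * (yz.2 * yz.1), mem_inf.2
    ⟨(MonoidHom.mem_ker).2 (by simp [(hZ yz.2).2.1, yz.1.2.2.2]),
      mul_mem (inv_mem hcQ) (mul_mem (hZ yz.2).2.2 yz.1.2.2.1)⟩⟩
  have hdecomp : ∀ yz : X × ↥(Q ⊓ A), IsPDecomposition p (yz.2 * yz.1 : G) yz.2 yz.1 := fun yz =>
    ⟨isPElement_of_mem_isPGroup hQ.isPGroup (hZ yz.2).1, yz.1.2.1, yz.1.2.2.1 _ (hZ yz.2).1, rfl⟩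
  have hinj : Function.Injective Φ := fun yz yz' h => by
    have hmul : (yz.2 * yz.1 : G) = yz'.2 * yz'.1 := mul_left_cancel (congrArg Subtype.val h)
    obtain ⟨h₁, h₂⟩ := (hmul ▸ hdecomp yz).unique (hdecomp yz')
    exact Prod.ext (Subtype.ext h₂) (Subtype.ext h₁)
  have hsurj : Function.Surjective Φ := fun ⟨g, hg⟩ => by
    obtain ⟨x, y, h⟩ := exists_isPDecomposition (p := p) (c * g)
    have hcg : zpowers (c * g) ≤ centralizer (Q : Set G) := zpowers_le.2 (mul_mem hcQ hg.2)
    have hfcg : f (c * g) = f c := by rw [map_mul, (MonoidHom.mem_ker).1 hg.1, mul_one]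
    obtain ⟨hfx, hfy⟩ := (hfcg ▸ h.map f).unique (hc.map f).isPDecomposition
    have hxC := hcg h.left_mem_zpowers
    have hxQ : x ∈ Q := hQ.mem_of_mem_normalizer h.isPElement hfx (centralizer_le_normalizer _ hxC)
    refine ⟨(⟨y, h.isPRegular, hcg h.right_mem_zpowers, hfy⟩,
      ⟨x, mem_inf.2 ⟨hxQ, mem_inf.2 ⟨hfx, hxC⟩⟩⟩), Subtype.ext ?_⟩
    change c⁻¹ * (x * y) = g
    rw [h.mul_eq, inv_mul_cancel_left]
  have hcard : Nat.card X * Nat.card ↥(Q ⊓ A) = Q.relIndex A * Nat.card ↥(Q ⊓ A) := by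
    rw [← Nat.card_prod, Nat.card_congr (Equiv.ofBijective Φ ⟨hinj, hsurj⟩), ← inf_relIndex_right,
      mul_comm, relIndex, ← Nat.card_congr (subgroupOfEquivOfLe (inf_le_right (a := Q))).toEquiv,
      card_mul_index]
  rw [Nat.eq_of_mul_eq_mul_right Nat.card_pos hcard]
  exact hQ.not_dvd_relIndex_inf_centralizer

theorem exists_conj_mem_sup_centralizer (hQ : IsSylowIn p Q f.ker)
    (hQc : ∀ y, IsPRegular p y → f y = f c → ¬ p ∣ (centralizer {y}).relIndex f.ker)
    (hc : IsPRegular p c) {x : G} (hx : f x = f c) :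
    ∃ m ∈ f.ker, m * x * m⁻¹ ∈ Q ⊔ centralizer (Q : Set G) := by
  obtain ⟨u, v, huv⟩ := exists_isPDecomposition (p := p) x
  obtain ⟨hfu, hfv⟩ := (hx ▸ huv.map f).unique (hc.map f).isPDecomposition
  obtain ⟨m, hm, hmQ⟩ :=
    exists_forall_conj_mem_of_not_dvd_relIndex hQ.isPGroup hQ.le (hQc v huv.isPRegular hfv)
  have hvQ : m⁻¹ * v * m ∈ centralizer (Q : Set G) := inv_mul_mul_mem_centralizer hmQ
  set C := centralizer {m⁻¹ * v * m}
  have hQC : Q ≤ C := fun q hq => mem_centralizer_singleton_iff.2 (hvQ q hq)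
  have hu : zpowers (m⁻¹ * u * m) ≤ f.ker ⊓ C := zpowers_le.2 (mem_inf.2
    ⟨by simpa using f.normal_ker.conj_mem u hfu m⁻¹, mem_centralizer_singleton_iff_commute.2
      (by simpa using (Commute.conj_iff m⁻¹).2 huv.commute)⟩)
  have hpu : IsPElement p (m⁻¹ * u * m) := by simpa using huv.isPElement.conj m⁻¹
  obtain ⟨n, hn, hnQ⟩ := exists_forall_conj_mem_of_not_dvd_relIndex hpu.isPGroup_zpowers hu fun h =>
    hQ.not_dvd_relIndex (h.trans
      ⟨_, (relIndex_mul_relIndex Q (f.ker ⊓ C) f.ker (le_inf hQ.le hQC) inf_le_left).symm⟩)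
  have hnv : n * (m⁻¹ * v * m) * n⁻¹ = m⁻¹ * v * m :=
    mul_inv_eq_iff_eq_mul.2 (mem_centralizer_singleton_iff.1 hn.2)
  refine ⟨n * m⁻¹, mul_mem hn.1 (inv_mem hm), ?_⟩
  have hprod : n * m⁻¹ * x * (n * m⁻¹)⁻¹ =
      n * (m⁻¹ * u * m) * n⁻¹ * (n * (m⁻¹ * v * m) * n⁻¹) := by
    rw [← huv.mul_eq]
    group
  rw [hprod, hnv]
  exact mul_mem (mem_sup_left (hnQ _ (mem_zpowers _))) (mem_sup_right hvQ)

theorem mem_sup_centralizer_of_conj_mem (hQ : IsSylowIn p Q f.ker)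
    (hQc : ∀ y, IsPRegular p y → f y = f c → ¬ p ∣ (centralizer {y}).relIndex f.ker)
    (hc : IsPRegular p c) (hcQ : c ∈ centralizer (Q : Set G)) {m : G} (hm : m ∈ f.ker)
    (hmc : m * c * m⁻¹ ∈ Q ⊔ centralizer (Q : Set G)) : m ∈ Q ⊔ centralizer (Q : Set G) := by
  refine mem_of_conj_mem_of_forall_exists_conj_mem (M := f.ker) (mem_sup_right hcQ)
    (fun x hx => exists_conj_mem_sup_centralizer hQ hQc hc ?_) hm hmc
  rw [MonoidHom.mem_ker, map_mul, map_inv, inv_mul_eq_one] at hx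
  exact hx.symm

theorem le_centralizer_of_not_dvd_relIndex_mul (hQ : IsSylowIn p Q f.ker)
    (hQc : ∀ y, IsPRegular p y → f y = f c → ¬ p ∣ (centralizer {y}).relIndex f.ker)
    (hc : IsPRegular p c) (hcQ : c ∈ centralizer (Q : Set G))
    (hQmul : ∀ x ∈ Q, ¬ p ∣ (centralizer {x * c}).relIndex (centralizer {c})) :
    Q ≤ centralizer (Q : Set G) := fun x hx => by
  have hQN : Q ≤ f.ker ⊓ centralizer {c} :=
    le_inf hQ.le fun q hq => mem_centralizer_singleton_iff.2 (hcQ q hq)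
  have hnorm : centralizer {c} ≤ normalizer ((f.ker ⊓ centralizer {c} : Subgroup G) : Set G) :=
    (le_inf le_normalizer_of_normal le_normalizer).trans inf_normalizer_le_normalizer_inf
  obtain ⟨m, hm, hmQ⟩ := exists_forall_conj_mem_of_not_dvd_relIndex hQ.isPGroup hQN fun h =>
    hQmul x hx (h.trans (relIndex_dvd_relIndex_of_le_normalizer inf_le_right hnorm))
  have hmc : m * c * m⁻¹ = c := mul_inv_eq_iff_eq_mul.2 (mem_centralizer_singleton_iff.1 hm.2)
  have hmN : m ∈ normalizer (Q : Set G) := sup_centralizer_le_normalizer Q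
    (mem_sup_centralizer_of_conj_mem hQ hQc hc hcQ hm.1 (hmc.symm ▸ mem_sup_right hcQ))
  have hdecomp : IsPDecomposition p (x * c) x c :=
    ⟨isPElement_of_mem_isPGroup hQ.isPGroup hx, hc, hcQ x hx, rfl⟩
  intro q hq
  have hmq : m⁻¹ * q * m ∈ Q := (mem_normalizer_iff''.1 hmN q).1 hq
  have hqx : q ∈ centralizer {x * c} := by simpa [mul_assoc] using hmQ _ hmq
  rw [hdecomp.centralizer_eq] at hqx
  exact mem_centralizer_singleton_iff.1 hqx.1

theorem IsSylowIn.exists_normal_forall_isPRegular_mem (hQ : IsSylowIn p Q f.ker)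
    (hQc : ∀ y, IsPRegular p y → f y = f c → ¬ p ∣ (centralizer {y}).relIndex f.ker)
    (hc : IsPRegular p c) (hcQ : c ∈ centralizer (Q : Set G))
    (hQmul : ∀ x ∈ Q, ¬ p ∣ (centralizer {x * c}).relIndex (centralizer {c})) :
    ∃ K : Subgroup G, K.Normal ∧ K ≤ f.ker ∧ ¬ p ∣ Nat.card K ∧
      ∀ x ∈ f.ker, IsPRegular p x → x ∈ K := by
  have hcomm : Q ≤ centralizer (Q : Set G) :=
    le_centralizer_of_not_dvd_relIndex_mul hQ hQc hc hcQ hQmul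
  have hnorm : f.ker ⊓ normalizer (Q : Set G) ≤ centralizer (Q : Set G) := fun n hn =>
    sup_le hcomm le_rfl (mem_sup_centralizer_of_conj_mem hQ hQc hc hcQ hn.1
      (mem_sup_right (conj_mem_centralizer_of_mem_normalizer hn.2 hcQ)))
  obtain ⟨K, hKM, hK, hreg⟩ := hQ.exists_le_forall_isPRegular_mem hnorm
  refine ⟨K, ⟨fun x hx g => hreg _ (f.normal_ker.conj_mem x (hKM hx) g) ?_⟩, hKM, hK, hreg⟩
  exact (isPRegular_of_not_dvd_card hK hx).conj g

theorem IsPIndexRigid.exists_isPRegular_pIndex_eq {a : ℕ} (hG : IsPIndexRigid p a G)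
    (hres : pResidual p G = ⊤) (hf : Function.Surjective f) {z : H} (hz : IsPRegular p z) :
    ∃ Q c, IsSylowIn p Q f.ker ∧ IsPRegular p c ∧ c ∈ centralizer (Q : Set G) ∧ f c = z ∧
      pIndex p c = pIndex p z := by
  obtain ⟨T, hT⟩ := exists_isSylowIn p ((centralizer {z}).comap f)
  have hQ : IsSylowIn p (T ⊓ f.ker) f.ker :=
    hT.inf (f.ker_le_comap _) le_normalizer_of_normal
  obtain ⟨c, hc, hcQ, rfl⟩ := exists_isPRegular_mem_centralizer_of_sup_eq_top
    (sup_centralizer_eq_top_of_isPGroup (fun _ => hG.pIndex_eq_one) hres hQ.isPGroup hQ.le) hf hz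
  have hTQ : T ≤ normalizer ((T ⊓ f.ker : Subgroup G) : Set G) :=
    (le_inf le_normalizer le_normalizer_of_normal).trans inf_normalizer_le_normalizer_inf
  obtain ⟨c', ⟨hc', hcQ', hfc'⟩, -, hpc'⟩ := exists_mem_pIndex_eq_of_not_dvd_card hf hT
    (fun _ hy => hy.2.2) (fun t ht y hy => by
      have htc : Commute (f t) (f c) := mem_centralizer_singleton_iff_commute.1 (hT.le ht)
      refine ⟨hy.1.conj t, conj_mem_centralizer_of_mem_normalizer (hTQ ht) hy.2.1, ?_⟩
      rw [map_mul, map_mul, map_inv, hy.2.2, htc.eq, mul_inv_cancel_right])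
    (not_dvd_card_isPRegular_fiber hQ hc hcQ)
  exact ⟨_, c', hQ, hc', hcQ', hfc', hpc'⟩

theorem IsPIndexRigid.exists_normal_forall_isPRegular_mem_ker {a : ℕ} (hG : IsPIndexRigid p a G)
    (hres : pResidual p G = ⊤) (hf : Function.Surjective f) {z : H} (hz : IsPRegular p z)
    (hz1 : pIndex p z ≠ 1) :
    ∃ K : Subgroup G, K.Normal ∧ K ≤ f.ker ∧ ¬ p ∣ Nat.card K ∧
      ∀ x ∈ f.ker, IsPRegular p x → x ∈ K := by
  obtain ⟨Q, c, hQ, hc, hcQ, rfl, hpc⟩ := hG.exists_isPRegular_pIndex_eq hres hf hz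
  have hca : pIndex p c = a := hG.pIndex_eq_of_isPRegular hc (hpc ▸ hz1)
  refine hQ.exists_normal_forall_isPRegular_mem (fun y hy hyc => ?_) hc hcQ fun x hx => ?_
  · have hy1 : pIndex p y ≠ 1 := fun h =>
      hz1 (Nat.dvd_one.1 (hyc ▸ h ▸ pIndex_map_dvd hf y))
    have hpy : pIndex p y = pIndex p (f y) := by
      rw [hG.pIndex_eq_of_isPRegular hy hy1, hyc, ← hpc, hca]
    exact fun h => (pIndex_map_eq_iff hf).1 hpy
      (h.trans (relIndex_dvd_relIndex_of_le_normalizer (f.ker_le_comap _) le_normalizer_of_normal))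
  · have hdecomp : IsPDecomposition p (x * c) x c :=
      ⟨isPElement_of_mem_isPGroup hQ.isPGroup hx, hc, hcQ x hx, rfl⟩
    refine (ordProj_index_eq_iff (hdecomp.centralizer_eq.le.trans inf_le_right)).1 ?_
    exact (hG.pIndex_eq hdecomp (hpc ▸ hz1)).trans hca.symm

theorem isPGroup_of_forall_pIndex_eq_one (hG : pResidual p G = ⊤)
    (hreg : ∀ y : G, IsPRegular p y → pIndex p y = 1) : IsPGroup p G := by
  obtain ⟨P, hP⟩ := exists_isSylowIn p (1 : G →* Unit).ker
  have hPG : ∀ m : G, m ∈ normalizer (P : Set G) := fun m => by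
    refine sup_centralizer_le_normalizer P (mem_sup_centralizer_of_conj_mem (c := 1) hP
      (fun y hy _ => ?_) .one (one_mem _) rfl ?_)
    · rw [MonoidHom.ker_one, relIndex_top_right]
      exact pIndex_eq_one_iff.1 (hreg y hy)
    · simp
  have hPtop : P = ⊤ := eq_top_of_pResidual_eq_top hG fun x hx =>
    hP.mem_of_mem_normalizer hx rfl (hPG x)
  exact hP.isPGroup.of_equiv ((MulEquiv.subgroupCongr hPtop).trans topEquiv)

end Complement

section Factor

universe u

variable {G H S : Type u} [Group G] [Group H] [Group S] {p : ℕ} {f : G →* H}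

/-- `φ : K →* S` exhibits `S` as a nonabelian simple quotient of `K` of order divisible by `p`. -/
structure IsNonabelianFactor (p : ℕ) {K S : Type u} [Group K] [Group S] (φ : K →* S) : Prop where
  surjective : Function.Surjective φ
  isSimpleGroup : IsSimpleGroup S
  not_comm : ¬ ∀ a b : S, a * b = b * a
  dvd_card : p ∣ Nat.card S

/-- No subgroup of `G` has a nonabelian simple quotient of order divisible by `p`. -/
def HasNoNonabelianFactor (p : ℕ) (G : Type u) [Group G] : Prop :=
  ∀ (K : Subgroup G) (S : Type u) [Group S] (φ : K →* S), ¬ IsNonabelianFactor p φ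

/-- Two nonabelian simple factors of order divisible by `p` occur one above the other in a
subnormal chain: a quotient of a subnormal subgroup `K₁`, and a quotient of some `K₂ ≥ K₁` in
which `K₁` is killed. -/
def HasTwoNonabelianFactors (p : ℕ) (G : Type u) [Group G] : Prop :=
  ∃ (K₁ K₂ : Subgroup G) (S₁ S₂ : Type u) (_ : Group S₁) (_ : Group S₂) (φ₁ : K₁ →* S₁)
    (φ₂ : K₂ →* S₂), K₁.IsSubnormal ∧ K₁ ≤ K₂ ∧ K₁.subgroupOf K₂ ≤ φ₂.ker ∧
      IsNonabelianFactor p φ₁ ∧ IsNonabelianFactor p φ₂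

theorem IsNonabelianFactor.not_isSolvable {φ : G →* S} (hφ : IsNonabelianFactor p φ) :
    ¬ Group.IsSolvable G := fun _ =>
  have := hφ.isSimpleGroup
  hφ.not_comm (IsSimpleGroup.comm_iff_isSolvable.2 (Group.isSolvable_of_surjective hφ.surjective))

theorem IsNonabelianFactor.ker_ne_top {φ : G →* S} (hφ : IsNonabelianFactor p φ) :
    φ.ker ≠ ⊤ := fun htop => hφ.not_comm fun a b => by
  have hone (s : S) : s = 1 := by
    obtain ⟨g, rfl⟩ := hφ.surjective s
    exact φ.mem_ker.1 (htop ▸ mem_top g)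
  rw [hone a, hone b]

theorem IsNonabelianFactor.comp_subgroupComap {K N : Subgroup G} [N.Normal] {φ : K →* S}
    (hφ : IsNonabelianFactor p φ) (hN : ¬ N.subgroupOf K ≤ φ.ker) :
    IsNonabelianFactor p (φ.comp (N.subtype.subgroupComap K)) where
  __ := hφ
  surjective s := by
    have := hφ.isSimpleGroup
    have hnormal : ((N.subgroupOf K).map φ).Normal := Normal.map inferInstance φ hφ.surjective
    have htop : (N.subgroupOf K).map φ = ⊤ :=
      hnormal.eq_bot_or_eq_top.resolve_left fun h => hN ((Subgroup.map_eq_bot_iff _).1 h)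
    obtain ⟨k, hk, rfl⟩ := htop ▸ mem_top s
    exact ⟨⟨⟨k, mem_subgroupOf.1 hk⟩, k.2⟩, rfl⟩

theorem IsNonabelianFactor.exists_comp_subgroupMap_eq {K : Subgroup G} {φ : K →* S}
    (hφ : IsNonabelianFactor p φ) (hf : f.ker.subgroupOf K ≤ φ.ker) :
    ∃ ψ : K.map f →* S, ψ.comp (f.subgroupMap K) = φ ∧ IsNonabelianFactor p ψ := by
  have hker : (f.subgroupMap K).ker ≤ φ.ker := fun k hk =>
    hf (mem_subgroupOf.2 (congrArg Subtype.val (MonoidHom.mem_ker.1 hk)))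
  let ψ : K.map f →* S :=
    MonoidHom.liftOfSurjective (f.subgroupMap K) (f.subgroupMap_surjective K) ⟨φ, hker⟩
  have hψ : ψ.comp (f.subgroupMap K) = φ :=
    MonoidHom.ext <| MonoidHom.liftOfRightInverse_comp_apply _ _
      (Function.rightInverse_surjInv _) _
  refine ⟨ψ, hψ, { hφ with surjective := ?_ }⟩
  exact Function.Surjective.of_comp (g := f.subgroupMap K)
    (by rw [← MonoidHom.coe_comp, hψ]; exact hφ.surjective)

theorem HasNoNonabelianFactor.not_hasTwoNonabelianFactors (h : HasNoNonabelianFactor p G) :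
    ¬ HasTwoNonabelianFactors p G := fun ⟨_, _, _, _, _, _, _, _, _, _, _, hφ, _⟩ => h _ _ _ hφ

theorem hasNoNonabelianFactor_of_isSolvable [Group.IsSolvable G] : HasNoNonabelianFactor p G :=
  fun _ _ _ _ hφ => hφ.not_isSolvable inferInstance

theorem hasNoNonabelianFactor_of_not_dvd_card (hG : ¬ p ∣ Nat.card G) :
    HasNoNonabelianFactor p G := fun K _ _ φ hφ =>
  hG <| hφ.dvd_card.trans <|
    (card_dvd_of_surjective φ hφ.surjective).trans (card_subgroup_dvd_card K)

theorem hasNoNonabelianFactor_of_isPGroup [Finite G] [Fact p.Prime] (hG : IsPGroup p G) :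
    HasNoNonabelianFactor p G :=
  have := hG.isNilpotent
  hasNoNonabelianFactor_of_isSolvable

theorem not_hasTwoNonabelianFactors_of_isSimpleGroup (hG : IsSimpleGroup G) :
    ¬ HasTwoNonabelianFactors p G := by
  rintro ⟨K₁, K₂, S₁, S₂, _, _, φ₁, φ₂, hK₁, -, hker, hφ₁, hφ₂⟩
  obtain rfl | rfl := hK₁.eq_bot_or_top_of_isSimpleGroup hG
  · exact hφ₁.not_isSolvable inferInstance
  · exact hφ₂.ker_ne_top (top_le_iff.1 hker)

theorem HasTwoNonabelianFactors.of_surjective (hf : Function.Surjective f)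
    (hker : HasNoNonabelianFactor p f.ker) (hG : HasTwoNonabelianFactors p G) :
    HasTwoNonabelianFactors p H := by
  have hle {K : Subgroup G} {S : Type u} [Group S] {φ : K →* S} (hφ : IsNonabelianFactor p φ) :
      f.ker.subgroupOf K ≤ φ.ker :=
    not_not.1 fun h => hker _ _ _ (hφ.comp_subgroupComap h)
  obtain ⟨K₁, K₂, S₁, S₂, _, _, φ₁, φ₂, hK₁, hK, h12, hφ₁, hφ₂⟩ := hG
  obtain ⟨ψ₁, -, hψ₁⟩ := hφ₁.exists_comp_subgroupMap_eq (hle hφ₁)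
  obtain ⟨ψ₂, rfl, hψ₂⟩ := hφ₂.exists_comp_subgroupMap_eq (hle hφ₂)
  refine ⟨_, _, S₁, S₂, _, _, ψ₁, ψ₂, hK₁.map hf, map_mono hK, ?_, hψ₁, hψ₂⟩
  rintro ⟨_, _⟩ ⟨g, hg, rfl⟩
  exact h12 (x := ⟨g, hK hg⟩) (mem_subgroupOf.2 hg)

theorem HasTwoNonabelianFactors.ker (hH : HasNoNonabelianFactor p H)
    (hG : HasTwoNonabelianFactors p G) (f : G →* H) : HasTwoNonabelianFactors p f.ker := by
  have hnle {K : Subgroup G} {S : Type u} [Group S] {φ : K →* S} (hφ : IsNonabelianFactor p φ) :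
      ¬ f.ker.subgroupOf K ≤ φ.ker := fun h =>
    have ⟨_, _, hψ⟩ := hφ.exists_comp_subgroupMap_eq h
    hH _ _ _ hψ
  obtain ⟨K₁, K₂, S₁, S₂, _, _, φ₁, φ₂, hK₁, hK, h12, hφ₁, hφ₂⟩ := hG
  exact ⟨_, _, S₁, S₂, _, _, _, _, hK₁.subgroupOf, subgroupOf_mono _ hK,
    fun k hk => h12 (x := ⟨k, _⟩) hk,
    hφ₁.comp_subgroupComap (hnle hφ₁), hφ₂.comp_subgroupComap (hnle hφ₂)⟩

theorem HasTwoNonabelianFactors.quotient {N : Subgroup G} [N.Normal]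
    (hN : HasNoNonabelianFactor p N) (hG : HasTwoNonabelianFactors p G) :
    HasTwoNonabelianFactors p (G ⧸ N) := by
  refine hG.of_surjective (QuotientGroup.mk'_surjective N) ?_
  rwa [QuotientGroup.ker_mk']

theorem HasTwoNonabelianFactors.of_quotient {N : Subgroup G} [N.Normal]
    (hN : HasNoNonabelianFactor p (G ⧸ N)) (hG : HasTwoNonabelianFactors p G) :
    HasTwoNonabelianFactors p N := by
  have h := hG.ker hN (QuotientGroup.mk' N)
  rwa [QuotientGroup.ker_mk'] at h

end Factor

section Series

universe u

variable {G : Type u} [Group G] {p n : ℕ} {s : Fin (n + 1) → Subgroup G}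

theorem isSubnormal_of_series (hmono : Monotone s) (hlast : s (Fin.last n) = ⊤)
    (hnorm : ∀ i : Fin n, ((s i.castSucc).subgroupOf (s i.succ)).Normal) (i : Fin (n + 1)) :
    (s i).IsSubnormal := by
  induction i using Fin.reverseInduction with
  | last => exact hlast ▸ IsSubnormal.top
  | cast i ih => exact ih.step _ _ (hmono (Fin.castSucc_le_succ i)) (hnorm i)

theorem hasTwoNonabelianFactors_of_series (hmono : Monotone s) (hlast : s (Fin.last n) = ⊤)
    (hnorm : ∀ i : Fin n, ((s i.castSucc).subgroupOf (s i.succ)).Normal) {i j : Fin n}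
    (hij : i < j)
    (hi : IsNonabelianFactor p (QuotientGroup.mk' ((s i.castSucc).subgroupOf (s i.succ))))
    (hj : IsNonabelianFactor p (QuotientGroup.mk' ((s j.castSucc).subgroupOf (s j.succ)))) :
    HasTwoNonabelianFactors p G := by
  refine ⟨s i.succ, s j.succ, _, _, _, _, _, _, isSubnormal_of_series hmono hlast hnorm _,
    hmono (Fin.succ_le_succ_iff.2 hij.le), ?_, hi, hj⟩
  rw [QuotientGroup.ker_mk']
  exact subgroupOf_mono _ (hmono (Fin.succ_le_castSucc_iff.2 hij))

end Series

section PPrimeCore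

variable {G : Type*} [Group G] {p : ℕ}

/-- The largest normal subgroup `O_{p'}(G)` of order prime to `p`, for finite `G` and prime `p`. -/
def pPrimeCore (p : ℕ) (G : Type*) [Group G] : Subgroup G :=
  sSup {N : Subgroup G | N.Normal ∧ ¬ p ∣ Nat.card N}

instance normal_pPrimeCore : (pPrimeCore p G).Normal := sSup_normal _ fun _ hN => hN.1

theorem le_pPrimeCore {N : Subgroup G} [hN : N.Normal] (hNp : ¬ p ∣ Nat.card N) :
    N ≤ pPrimeCore p G :=
  le_sSup ⟨hN, hNp⟩

variable [Fact p.Prime]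

theorem not_dvd_card_sup {N K : Subgroup G} [K.Normal] (hN : ¬ p ∣ Nat.card N)
    (hK : ¬ p ∣ Nat.card K) : ¬ p ∣ Nat.card (N ⊔ K : Subgroup G) := by
  have hcard : Nat.card K * K.relIndex N = Nat.card (N ⊔ K : Subgroup G) := by
    have h := relIndex_mul_relIndex ⊥ K (N ⊔ K) bot_le le_sup_right
    rwa [relIndex_bot_left, relIndex_bot_left, relIndex_sup_right] at h
  rw [← hcard, (Fact.out : p.Prime).dvd_mul]
  exact not_or.2 ⟨hK, fun h => hN (h.trans (relIndex_dvd_card K N))⟩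

variable [Finite G]

theorem not_dvd_card_pPrimeCore : ¬ p ∣ Nat.card (pPrimeCore p G) := by
  have hsup : SupClosed {N : Subgroup G | N.Normal ∧ ¬ p ∣ Nat.card N} :=
    fun N ⟨_, hN⟩ K ⟨_, hK⟩ => ⟨sup_normal N K, not_dvd_card_sup hN hK⟩
  refine (hsup.sSup_mem (Set.toFinite _) ⟨inferInstance, ?_⟩ le_rfl).2
  rw [card_bot, Nat.dvd_one]
  exact (Fact.out : p.Prime).ne_one

instance characteristic_pPrimeCore : (pPrimeCore p G).Characteristic :=
  characteristic_iff_map_le.2 fun φ =>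
    have : ((pPrimeCore p G).map φ.toMonoidHom).Normal := Normal.map inferInstance _ φ.surjective
    le_pPrimeCore <| (card_map_of_injective (f := φ.toMonoidHom) φ.injective).symm ▸
      not_dvd_card_pPrimeCore

theorem eq_bot_of_not_dvd_card_of_pPrimeCore_eq_bot (hG : pPrimeCore p G = ⊥) {M N : Subgroup G}
    [M.Normal] (hNM : N ≤ M) (hMN : M ≤ normalizer (N : Set G)) (hN : ¬ p ∣ Nat.card N) :
    N = ⊥ := by
  have hcore : (pPrimeCore p M).map M.subtype = ⊥ := by
    refine le_bot_iff.1 (hG ▸ le_pPrimeCore ?_)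
    exact (card_map_of_injective M.subtype_injective).symm ▸ not_dvd_card_pPrimeCore
  have : (N.subgroupOf M).Normal := (normal_subgroupOf_iff_le_normalizer hNM).2 hMN
  have hle : N.subgroupOf M ≤ pPrimeCore p M := le_pPrimeCore <| by
    rwa [← card_map_of_injective M.subtype_injective, map_subgroupOf_eq_of_le hNM]
  exact le_bot_iff.1 (hcore ▸ map_subgroupOf_eq_of_le hNM ▸ map_mono hle)

end PPrimeCore

section MinimalNormal

variable {G : Type*} [Group G] {p : ℕ} {M N : Subgroup G}

/-- `N` is a minimal normal subgroup of `M`, both being subgroups of `G`; normality of `N` in `M`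
is expressed through the normalizer of `N` in `G`. -/
def IsMinimalNormalIn (N M : Subgroup G) : Prop :=
  Minimal (fun K : Subgroup G => K ≤ M ∧ M ≤ normalizer (K : Set G) ∧ K ≠ ⊥) N

theorem exists_isMinimalNormalIn [Finite G] (hM : M ≠ ⊥) : ∃ N, IsMinimalNormalIn N M :=
  exists_minimal_of_wellFoundedLT _ ⟨M, le_rfl, le_normalizer, hM⟩

namespace IsMinimalNormalIn

theorem eq_of_le (hN : IsMinimalNormalIn N M) {K : Subgroup G} (hKN : K ≤ N)
    (hMK : M ≤ normalizer (K : Set G)) (hK : K ≠ ⊥) : K = N :=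
  hKN.antisymm (hN.le_of_le ⟨hKN.trans hN.prop.1, hMK, hK⟩ hKN)

theorem isSimpleGroup (hM : IsMinimalNormalIn M M) : IsSimpleGroup M :=
  Subgroup.isSimpleGroup_iff.2 ⟨hM.prop.2.2, fun _ hKM hK => or_iff_not_imp_left.2
    (hM.eq_of_le hKM ((normal_subgroupOf_iff_le_normalizer hKM).1 hK))⟩

variable [Finite G]

theorem mem_normalizer [M.Normal] (hN : IsMinimalNormalIn N M) {x : G}
    (hx : centralizer {x} ⊓ N ≠ ⊥) : x ∈ normalizer (N : Set G) := by
  let c : G ≃* G := MulAut.conj x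
  have hMc : M ≤ normalizer (N.map c.toMonoidHom : Set G) := by
    rw [← map_equiv_normalizer_eq, ← Normal.map_conj_eq M x]
    exact map_mono hN.prop.2.1
  have hle : centralizer {x} ⊓ N ≤ N ⊓ N.map c.toMonoidHom := fun y ⟨hyx, hy⟩ =>
    mem_inf.2 ⟨hy, y, hy, (mem_centralizer_singleton_iff_commute.1 hyx).symm.mul_inv_cancel⟩
  have hinf : N ⊓ N.map c.toMonoidHom = N :=
    hN.eq_of_le inf_le_left ((le_inf hN.prop.2.1 hMc).trans inf_normalizer_le_normalizer_inf)
      (ne_bot_of_le_ne_bot hx hle)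
  exact mem_normalizer_iff_map_conj_eq.2 <| Eq.symm <|
    eq_of_le_of_card_ge (inf_eq_left.1 hinf) (card_map_of_injective c.injective).le

theorem isSimpleGroup_of_pResidual_eq_top [Fact p.Prime] (hM : IsMinimalNormalIn M ⊤)
    (hres : pResidual p G = ⊤) (hcore : pPrimeCore p G = ⊥)
    (hone : ∀ x : G, IsPElement p x → pIndex p x = 1) : IsSimpleGroup M := by
  have : M.Normal := normalizer_eq_top_iff.1 (top_le_iff.1 hM.prop.2.1)
  obtain ⟨N, hN⟩ := exists_isMinimalNormalIn hM.prop.2.2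
  obtain ⟨hNM, hMN, hNbot⟩ := hN.prop
  have hcard : p ∣ Nat.card N :=
    not_not.1 fun h => hNbot (eq_bot_of_not_dvd_card_of_pPrimeCore_eq_bot hcore hNM hMN h)
  have hnormal : normalizer (N : Set G) = ⊤ := by
    refine eq_top_of_pResidual_eq_top hres fun x hx => hN.mem_normalizer fun hbot => ?_
    have hdvd : Nat.card N ∣ classSize x := by
      rw [← relIndex_bot_left, ← hbot, inf_relIndex_right]
      exact (relIndex_dvd_relIndex_of_le_normalizer hNM hMN).trans
        (relIndex_dvd_index_of_normal_right _ M)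
    exact pIndex_eq_one_iff.1 (hone x hx) (hcard.trans hdvd)
  obtain rfl : N = M := hM.eq_of_le hNM hnormal.ge hNbot
  exact hN.isSimpleGroup

end IsMinimalNormalIn

end MinimalNormal

section Reduction

universe u

variable {G : Type u} [Group G] [Finite G] {p a : ℕ} [Fact p.Prime]

theorem IsPIndexRigid.isPGroup_quotient (hG : IsPIndexRigid p a G) (hres : pResidual p G = ⊤)
    (hcore : pPrimeCore p G = ⊥) {M : Subgroup G} [M.Normal] (hM : ¬ IsPGroup p M) :
    IsPGroup p (G ⧸ M) := by
  have hsurj := QuotientGroup.mk'_surjective M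
  refine isPGroup_of_forall_pIndex_eq_one (pResidual_eq_top_of_surjective hsurj hres)
    fun z hz => not_not.1 fun hz1 => hM ?_
  obtain ⟨K, _, -, hK, hmem⟩ := hG.exists_normal_forall_isPRegular_mem_ker hres hsurj hz hz1
  obtain rfl : K = ⊥ := le_bot_iff.1 (hcore ▸ le_pPrimeCore hK)
  rw [QuotientGroup.ker_mk'] at hmem
  refine isPGroup_of_forall_isPElement fun g hg => ?_
  obtain ⟨x, y, hxy⟩ := exists_isPDecomposition (p := p) g
  have hy : y = 1 := hmem y (zpowers_le.2 hg hxy.right_mem_zpowers) hxy.isPRegular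
  rw [← hxy.mul_eq, hy, mul_one]
  exact hxy.isPElement

theorem IsPIndexRigid.not_hasTwoNonabelianFactors_of_cores_eq_bot (hG : IsPIndexRigid p a G)
    (hres : pResidual p G = ⊤) (hcore : pPrimeCore p G = ⊥)
    (hpcore : ∀ N : Subgroup G, N.Normal → IsPGroup p N → N = ⊥) :
    ¬ HasTwoNonabelianFactors p G := fun htwo => by
  have hnontriv : (⊤ : Subgroup G) ≠ ⊥ := fun htop => by
    have : Subsingleton G := subsingleton_iff.1 (subsingleton_of_bot_eq_top htop.symm)
    exact hasNoNonabelianFactor_of_isSolvable.not_hasTwoNonabelianFactors htwo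
  obtain ⟨M, hM⟩ := exists_isMinimalNormalIn hnontriv
  have hnormal : M.Normal := normalizer_eq_top_iff.1 (top_le_iff.1 hM.prop.2.1)
  have hquot : IsPGroup p (G ⧸ M) :=
    hG.isPGroup_quotient hres hcore fun h => hM.prop.2.2 (hpcore M hnormal h)
  exact not_hasTwoNonabelianFactors_of_isSimpleGroup
    (hM.isSimpleGroup_of_pResidual_eq_top hres hcore fun _ => hG.pIndex_eq_one)
    (htwo.of_quotient (hasNoNonabelianFactor_of_isPGroup hquot))

theorem IsPIndexRigid.le_center (hG : IsPIndexRigid p a G) (hres : pResidual p G = ⊤)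
    {N : Subgroup G} [N.Normal] (hN : IsPGroup p N) : N ≤ center G := by
  refine centralizer_eq_top_iff_subset.1 ?_
  refine eq_top_of_pResidual_eq_top hres fun x hx => ?_
  have hle : N ≤ centralizer {x} := le_of_isPGroup_of_not_dvd_relIndex hN fun h =>
    pIndex_eq_one_iff.1 (hG.pIndex_eq_one hx) (h.trans (relIndex_dvd_index_of_normal_right _ N))
  exact mem_centralizer_iff.2 fun y hy => mem_centralizer_singleton_iff_commute.1 (hle hy)

theorem card_quotient_lt_card {N : Subgroup G} (hN : N ≠ ⊥) : Nat.card (G ⧸ N) < Nat.card G := by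
  rw [card_eq_card_quotient_mul_card_subgroup N]
  exact lt_mul_of_one_lt_right Nat.card_pos ((one_lt_card_iff_ne_bot N).2 hN)

theorem IsPIndexRigid.not_hasTwoNonabelianFactors (hG : IsPIndexRigid p a G) :
    ¬ HasTwoNonabelianFactors p G := by
  induction hn : Nat.card G using Nat.strong_induction_on generalizing G with | _ n ih =>
  subst hn
  intro htwo
  have hres : pResidual p G = ⊤ := by
    by_contra hne
    have htwo' : HasTwoNonabelianFactors p (pResidual p G) :=
      htwo.of_quotient (hasNoNonabelianFactor_of_not_dvd_card not_dvd_index_pResidual)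
    refine ih _ ?_ (hG.subgroup not_dvd_index_pResidual) rfl htwo'
    exact lt_of_le_of_ne (card_le_card_group _) fun h => hne (eq_top_of_card_eq _ h)
  have hquot (N : Subgroup G) [N.Normal] (hN : HasNoNonabelianFactor p N)
      (hrigid : IsPIndexRigid p a (G ⧸ N)) : N = ⊥ := by
    by_contra hne
    exact ih _ (card_quotient_lt_card hne) hrigid rfl (htwo.quotient hN)
  refine hG.not_hasTwoNonabelianFactors_of_cores_eq_bot hres ?_ (fun N _ hN => ?_) htwo
  · refine hquot _ (hasNoNonabelianFactor_of_not_dvd_card not_dvd_card_pPrimeCore) ?_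
    refine hG.map_of_not_dvd_card_ker (QuotientGroup.mk'_surjective _) ?_
    rw [QuotientGroup.ker_mk']
    exact not_dvd_card_pPrimeCore
  · refine hquot N (hasNoNonabelianFactor_of_isPGroup hN) ?_
    refine hG.map_of_ker_le_center (QuotientGroup.mk'_surjective N) ?_ ?_ <;>
      rw [QuotientGroup.ker_mk']
    exacts [hN, hG.le_center hres hN]

end Reduction

/-- If `G ∈ R(p)**`, then in any composition series of `G` at most one composition factor
is a nonabelian simple group whose order is divisible by `p`. -/
theorem rp_star_star_at_most_one_nonabelian_factor {G : Type*} [Group G] [Finite G] (p : ℕ)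
    (hp : p.Prime) (hR : IsPIndexExtremal p G)
    (hss : ∀ x : G, IsPElement p x → pIndex p x = 1)
    (n : ℕ) (s : Fin (n + 1) → Subgroup G)
    (hmono : Monotone s) (h0 : s 0 = ⊥) (hlast : s (Fin.last n) = ⊤)
    (hnorm : ∀ i : Fin n, ((s i.castSucc).subgroupOf (s i.succ)).Normal)
    (hsimple : ∀ i : Fin n, letI := hnorm i;
      IsSimpleGroup ((s i.succ) ⧸ (s i.castSucc).subgroupOf (s i.succ))) :
    ∀ i j : Fin n,
      (letI := hnorm i;
        (¬ ∀ a b : (s i.succ) ⧸ (s i.castSucc).subgroupOf (s i.succ), a * b = b * a) ∧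
          p ∣ Nat.card ((s i.succ) ⧸ (s i.castSucc).subgroupOf (s i.succ))) →
      (letI := hnorm j;
        (¬ ∀ a b : (s j.succ) ⧸ (s j.castSucc).subgroupOf (s j.succ), a * b = b * a) ∧
          p ∣ Nat.card ((s j.succ) ⧸ (s j.castSucc).subgroupOf (s j.succ))) →
      i = j := by
  intro i j hi hj
  have : Fact p.Prime := ⟨hp⟩
  obtain ⟨a, -, ha⟩ := hR
  have hG : IsPIndexRigid p a G := .of_forall_pIndex_eq hss fun g hg => ha _ ⟨hg, g, rfl⟩
  have hfactor (k : Fin n) (hk : (¬ ∀ a b : s k.succ ⧸ (s k.castSucc).subgroupOf (s k.succ),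
      a * b = b * a) ∧ p ∣ Nat.card (s k.succ ⧸ (s k.castSucc).subgroupOf (s k.succ))) :
      IsNonabelianFactor p (QuotientGroup.mk' ((s k.castSucc).subgroupOf (s k.succ))) :=
    ⟨QuotientGroup.mk'_surjective _, hsimple k, hk.1, hk.2⟩
  have hnlt {k l : Fin n} (hkl : k < l) hk hl : False :=
    hG.not_hasTwoNonabelianFactors <|
      hasTwoNonabelianFactors_of_series hmono hlast hnorm hkl (hfactor k hk) (hfactor l hl)
  obtain hij | hij | hij := lt_trichotomy i j
  exacts [(hnlt hij hi hj).elim, hij, (hnlt hij hj hi).elim]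
end

section
/- (Burnside) Let G be a finite group of composite order. If G has a conjugacy class whose size is p^a for some prime p and integer a ≥ 1, then G is not simple. -/
/-!
Let `G` be simple with a class `x^G` of size `p^a > 1`; then `G` is finite and `x` is not central.
For an irreducible character `χ` of degree `n` both `χ(x)` and `|x^G| χ(x) / n` are algebraic
integers, so if `p ∤ n` then `χ(x) / n` is one as well. It is an average of roots of unity, so by
Kronecker's theorem it is zero or has absolute value one; in the latter case `x` acts as a scalar,
which in a simple group is impossible for a nontrivial representation. Hence `p` divides
`χ(1) χ(x)` for all nontrivial `χ`, and the orthogonality relation `∑ χ(1) χ(x) = 0`, to which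
the trivial character contributes `1`, makes `1 / p` an algebraic integer.
-/

open Polynomial

/-! ### Averages of roots of unity -/

section Average

variable {ι : Type*} [Fintype ι]

lemma isOfFinOrder_average_of_numberField {K : Type*} [Field K] [NumberField K] {z : ι → K}
    (hz : ∀ i, IsOfFinOrder (z i)) (hint : IsIntegral ℤ ((∑ i, z i) / Fintype.card ι))
    (hne : (∑ i, z i) / (Fintype.card ι : K) ≠ 0) :
    IsOfFinOrder ((∑ i, z i) / (Fintype.card ι : K)) := by
  have norm_conjugate_le (φ : K →+* ℂ) : ‖φ ((∑ i, z i) / (Fintype.card ι : K))‖ ≤ 1 := by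
    rw [map_div₀, map_sum, map_natCast, norm_div, Complex.norm_natCast]
    refine div_le_one_of_le₀ ((norm_sum_le _ _).trans_eq ?_) (Nat.cast_nonneg _)
    have norm_eq_one (i : ι) : ‖φ (z i)‖ = 1 := (φ.toMonoidHom.isOfFinOrder (hz i)).norm_eq_one
    simp [norm_eq_one]
  obtain ⟨n, hn, hpow⟩ :=
    NumberField.Embeddings.pow_eq_one_of_norm_le_one K ℂ hne hint norm_conjugate_le
  exact isOfFinOrder_iff_pow_eq_one.2 ⟨n, hn, hpow⟩

lemma isOfFinOrder_average {L : Type*} [Field L] [CharZero L] {z : ι → L}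
    (hz : ∀ i, IsOfFinOrder (z i)) (hint : IsIntegral ℤ ((∑ i, z i) / Fintype.card ι))
    (hne : (∑ i, z i) / (Fintype.card ι : L) ≠ 0) :
    IsOfFinOrder ((∑ i, z i) / (Fintype.card ι : L)) := by
  let K := IntermediateField.adjoin ℚ (Set.range z)
  have : FiniteDimensional ℚ K := by
    refine IntermediateField.finiteDimensional_adjoin ?_
    rintro _ ⟨i, rfl⟩
    obtain ⟨k, hk, hpow⟩ := (hz i).exists_pow_eq_one
    exact .of_pow hk (hpow ▸ isIntegral_one)
  have : NumberField K := ⟨⟩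
  let w (i : ι) : K := ⟨z i, IntermediateField.subset_adjoin ℚ _ ⟨i, rfl⟩⟩
  have coe_average : (((∑ i, w i) / (Fintype.card ι : K) : K) : L) =
      (∑ i, z i) / Fintype.card ι := by simp [w]
  rw [← coe_average] at hint hne ⊢
  refine K.val.toMonoidHom.isOfFinOrder (isOfFinOrder_average_of_numberField (fun i ↦ ?_) ?_ ?_)
  · exact (Function.Injective.isOfFinOrder_iff (f := K.val.toMonoidHom) K.val.injective).1 (hz i)
  · exact (isIntegral_algHom_iff (K.val.restrictScalars ℤ) K.val.injective).1 hint
  · exact fun h ↦ hne (by simp [h])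

lemma eq_of_isIntegral_average {z : ι → ℂ} (hz : ∀ i, IsOfFinOrder (z i))
    (hint : IsIntegral ℤ ((∑ i, z i) / Fintype.card ι)) (hne : ∑ i, z i ≠ 0) (i j : ι) :
    z i = z j := by
  have : Nonempty ι := ⟨i⟩
  by_contra hij
  have norm_average_lt : ‖∑ i, (Fintype.card ι : ℝ)⁻¹ • z i‖ < 1 :=
    norm_sum_lt_of_strictConvexSpace (fun _ _ ↦ by positivity) (by simp) (Finset.mem_univ i)
      (Finset.mem_univ j) hij (by simp) (by simp) fun k _ ↦ (hz k).norm_eq_one.le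
  have average_eq : ∑ i, (Fintype.card ι : ℝ)⁻¹ • z i = (∑ i, z i) / Fintype.card ι := by
    simp [← Finset.mul_sum, div_eq_inv_mul]
  refine norm_average_lt.ne ?_
  rw [average_eq]
  exact (isOfFinOrder_average hz hint (div_ne_zero hne (by simp))).norm_eq_one

end Average

lemma not_isIntegral_inv_natCast {K : Type*} [Field K] [CharZero K] {n : ℕ} (hn : 1 < n) :
    ¬ IsIntegral ℤ (n : K)⁻¹ := by
  intro hint
  have inv_isIntegral : IsIntegral ℤ (n : ℚ)⁻¹ :=
    (isIntegral_algHom_iff ((algebraMap ℚ K).toIntAlgHom) (algebraMap ℚ K).injective).1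
      (by simpa using hint)
  obtain ⟨m, hm⟩ := IsIntegrallyClosed.isIntegral_iff.1 inv_isIntegral
  have mul_eq_one : (n : ℤ) * m = 1 := by
    have : (n : ℚ) * m = 1 := by
      rw [← eq_intCast (algebraMap ℤ ℚ), hm, mul_inv_cancel₀ (by positivity)]
    exact_mod_cast this
  have := Int.eq_one_of_mul_eq_one_right (by positivity) mul_eq_one
  omega

/-! ### Matrices of finite order -/

section FiniteOrder

variable {n K : Type*} [Fintype n] [DecidableEq n] [Field K] {M : Matrix n n K}

lemma isOfFinOrder_of_mem_roots_charpoly (hM : IsOfFinOrder M) {μ : K}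
    (hμ : μ ∈ M.charpoly.roots) : IsOfFinOrder μ := by
  cases isEmpty_or_nonempty n
  · simp [Matrix.charpoly_isEmpty] at hμ
  obtain ⟨k, hk, hpow⟩ := hM.exists_pow_eq_one
  have hspec : μ ∈ spectrum K M :=
    Matrix.mem_spectrum_iff_isRoot_charpoly.2 (isRoot_of_mem_roots hμ)
  have := spectrum.pow_mem_pow M k hspec
  rw [hpow, spectrum.one_eq] at this
  exact isOfFinOrder_iff_pow_eq_one.2 ⟨k, hk, this⟩

variable [IsAlgClosed K]

lemma isIntegral_trace_of_isOfFinOrder (hM : IsOfFinOrder M) : IsIntegral ℤ M.trace := by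
  rw [Matrix.trace_eq_sum_roots_charpoly]
  refine IsIntegral.multiset_sum fun μ hμ ↦ ?_
  obtain ⟨k, hk, hpow⟩ := (isOfFinOrder_of_mem_roots_charpoly hM hμ).exists_pow_eq_one
  exact .of_pow hk (hpow ▸ isIntegral_one)

-- The minimal polynomial divides both the separable `X ^ k - 1` and a power of `X - c`.
lemma eq_scalar_of_forall_mem_roots_charpoly [CharZero K] (hM : IsOfFinOrder M) {c : K}
    (hc : ∀ μ ∈ M.charpoly.roots, μ = c) : M = Matrix.scalar n c := by
  obtain ⟨k, hk, hpow⟩ := hM.exists_pow_eq_one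
  have charpoly_eq : M.charpoly = (X - C c) ^ M.charpoly.roots.card := by
    conv_lhs => rw [(IsAlgClosed.splits M.charpoly).eq_prod_roots_of_monic M.charpoly_monic,
      Multiset.eq_replicate_card.2 hc]
    simp
  have minpoly_squarefree : Squarefree (minpoly K M) :=
    (separable_X_pow_sub_C (1 : K) (by exact_mod_cast hk.ne') one_ne_zero).squarefree
      |>.squarefree_of_dvd (minpoly.dvd K M (by simp [hpow]))
  have minpoly_dvd : minpoly K M ∣ X - C c :=
    minpoly_squarefree.isRadical _ _ (charpoly_eq ▸ minpoly.dvd K M M.aeval_self_charpoly)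
  have aeval_eq : M - algebraMap K _ c = 0 := by simpa using minpoly.dvd_iff.1 minpoly_dvd
  exact sub_eq_zero.1 aeval_eq

lemma mem_range_scalar_of_isIntegral_trace_div {M : Matrix n n ℂ} (hM : IsOfFinOrder M)
    (hint : IsIntegral ℤ (M.trace / Fintype.card n)) (hne : M.trace ≠ 0) :
    M ∈ Set.range (Matrix.scalar n) := by
  have card_roots : Fintype.card M.charpoly.roots = Fintype.card n := by
    rw [Multiset.card_coe, splits_iff_card_roots.1 (IsAlgClosed.splits _),
      Matrix.charpoly_natDegree_eq_dim]
  have trace_eq : M.trace = ∑ μ : M.charpoly.roots, (μ : ℂ) := by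
    rw [Matrix.trace_eq_sum_roots_charpoly, Finset.sum, Multiset.map_univ_coe]
  rw [trace_eq] at hint hne
  rw [← card_roots] at hint
  have roots_eq := eq_of_isIntegral_average
    (fun μ ↦ isOfFinOrder_of_mem_roots_charpoly hM (Multiset.coe_mem (x := μ))) hint hne
  obtain ⟨μ, -, -⟩ := Finset.exists_ne_zero_of_sum_ne_zero hne
  refine ⟨μ, (eq_scalar_of_forall_mem_roots_charpoly hM fun ν hν ↦ ?_).symm⟩
  obtain ⟨ν', rfl⟩ : ∃ ν' : M.charpoly.roots, (ν' : ℂ) = ν :=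
    ⟨⟨ν, ⟨0, Multiset.count_pos.2 hν⟩⟩, rfl⟩
  exact roots_eq ν' μ

end FiniteOrder

/-! ### Conjugacy class sums -/

section ClassSum

variable {G : Type*} [Group G]

lemma ncard_conjugatesOf (x : G) : (conjugatesOf x).ncard = classSize x := by
  have index_eq : classSize x = (MulAction.stabilizer (ConjAct G) x).index := by
    rw [classSize, Subgroup.centralizer_eq_comap_stabilizer]
    exact Subgroup.index_comap_of_surjective _ ConjAct.toConjAct.surjective
  rw [index_eq, MulAction.index_stabilizer]
  congr 1 with y
  rw [ConjAct.mem_orbit_conjAct, isConj_comm, conjugatesOf, Set.mem_ofPred_eq]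

lemma classSize_eq_one_of_mem_center {x : G} (hx : x ∈ Subgroup.center G) : classSize x = 1 := by
  rw [classSize, Subgroup.centralizer_eq_top_iff_subset.2 (by simpa using hx), Subgroup.index_top]

variable [Finite G]

/-- The image under a multiplicative map `f` of the sum of the conjugacy class of `x` in the
integral group ring. -/
noncomputable def classSum {A : Type*} [Semiring A] (f : G →* A) (x : G) : A :=
  ∑ y ∈ (conjugatesOf x).toFinite.toFinset, f y

lemma commute_classSum {A : Type*} [Semiring A] (f : G →* A) (g x : G) :
    Commute (f g) (classSum f x) := by
  simp only [Commute, SemiconjBy, classSum, Finset.mul_sum, Finset.sum_mul, ← map_mul]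
  refine Finset.sum_equiv (MulAut.conj g).toEquiv (fun y ↦ ?_) fun y _ ↦ by simp
  have isConj_conj : IsConj y (g * y * g⁻¹) := isConj_iff.2 ⟨g, rfl⟩
  simp only [Set.Finite.mem_toFinset]
  exact ⟨fun h : IsConj x y ↦ h.trans isConj_conj, fun h ↦ IsConj.trans h isConj_conj.symm⟩

lemma isIntegral_classSum {A : Type*} [Ring A] (f : G →* A) (x : G) :
    IsIntegral ℤ (classSum f x) := by
  have lift_eq : MonoidAlgebra.lift ℤ A G f (classSum (MonoidAlgebra.of ℤ G) x) = classSum f x := by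
    simp [classSum]
  rw [← lift_eq]
  exact (IsIntegral.of_finite ℤ _).map (MonoidAlgebra.lift ℤ A G f)

lemma trace_classSum {n R : Type*} [Fintype n] [DecidableEq n] [CommSemiring R]
    (ρ : G →* Matrix n n R) (x : G) :
    (classSum ρ x).trace = classSize x * (ρ x).trace := by
  have trace_eq : ∀ y ∈ (conjugatesOf x).toFinite.toFinset, (ρ y).trace = (ρ x).trace := by
    intro y hy
    obtain ⟨g, rfl⟩ := isConj_iff.1 (by simpa [conjugatesOf] using hy)
    rw [map_mul, Matrix.trace_mul_comm, ← map_mul]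
    simp
  rw [classSum, Matrix.trace_sum, Finset.sum_congr rfl trace_eq, Finset.sum_const, nsmul_eq_mul,
    ← Set.ncard_eq_toFinset_card, ncard_conjugatesOf]

end ClassSum

/-! ### Absolutely irreducible representations -/

/-- A matrix representation is absolutely irreducible if the image of the group spans the full
matrix algebra. Over an algebraically closed field this is ordinary irreducibility, by a theorem of
Burnside; over any ring it is the form in which Schur's lemma applies. -/
def IsAbsolutelyIrreducible {G n R : Type*} [Monoid G] [Fintype n] [DecidableEq n] [CommSemiring R]
    (ρ : G →* Matrix n n R) : Prop :=
  Function.Surjective (MonoidAlgebra.lift R (Matrix n n R) G ρ)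

namespace IsAbsolutelyIrreducible

variable {G n : Type*} [Fintype n] [DecidableEq n]

lemma mem_range_scalar {R : Type*} [CommSemiring R] [Monoid G] {ρ : G →* Matrix n n R}
    (hρ : IsAbsolutelyIrreducible ρ) {M : Matrix n n R} (hM : ∀ g, Commute (ρ g) M) :
    M ∈ Set.range (Matrix.scalar n) := by
  rw [← Matrix.center_eq_range, Semigroup.mem_center_iff]
  intro B
  obtain ⟨b, rfl⟩ := hρ B
  induction b using MonoidAlgebra.induction_linear with
  | zero => simp
  | add f g hf hg => rw [map_add, add_mul, mul_add, hf, hg]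
  | single g r => rw [MonoidAlgebra.lift_single, smul_mul_assoc, mul_smul_comm, hM g]

variable [Group G]

lemma sum_eq_zero {R : Type*} [CommRing R] [IsDomain R] [Fintype G] {ρ : G →* Matrix n n R}
    (hρ : IsAbsolutelyIrreducible ρ) (hne : ρ ≠ 1) : ∑ g, ρ g = 0 := by
  have mul_sum_eq (h : G) : ρ h * ∑ g, ρ g = ∑ g, ρ g := by
    simp_rw [Finset.mul_sum, ← map_mul]
    exact Fintype.sum_equiv (Equiv.mulLeft h) _ _ fun _ ↦ rfl
  have sum_mul_eq (h : G) : (∑ g, ρ g) * ρ h = ∑ g, ρ g := by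
    simp_rw [Finset.sum_mul, ← map_mul]
    exact Fintype.sum_equiv (Equiv.mulRight h) _ _ fun _ ↦ rfl
  obtain ⟨c, hc⟩ := hρ.mem_range_scalar fun h ↦ (mul_sum_eq h).trans (sum_mul_eq h).symm
  obtain ⟨h, hh⟩ := DFunLike.ne_iff.1 hne
  have smul_sub_eq_zero : c • (ρ h - 1) = 0 := by
    have := mul_sum_eq h
    rw [← hc, Matrix.scalar_apply, ← Matrix.smul_one_eq_diagonal, mul_smul_comm, mul_one] at this
    rw [smul_sub, this, sub_self]
  rw [← hc, (smul_eq_zero.1 smul_sub_eq_zero).resolve_right (sub_ne_zero.2 hh), map_zero]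

variable [Finite G] [Nonempty n]

lemma exists_isIntegral_card_mul_eq {R : Type*} [CommRing R] {ρ : G →* Matrix n n R}
    (hρ : IsAbsolutelyIrreducible ρ) (x : G) :
    ∃ ω : R, IsIntegral ℤ ω ∧ Fintype.card n * ω = classSize x * (ρ x).trace := by
  obtain ⟨ω, hω⟩ := hρ.mem_range_scalar fun g ↦ commute_classSum ρ g x
  refine ⟨ω, ?_, ?_⟩
  · exact (isIntegral_algHom_iff (Matrix.scalar n : R →+* _).toIntAlgHom
      fun _ _ h ↦ Matrix.scalar_inj.1 h).1 (hω ▸ isIntegral_classSum ρ x)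
  · rw [← trace_classSum, ← hω]
    simp [Matrix.trace]

lemma isIntegral_trace_div_card {K : Type*} [Field K] [CharZero K] [IsAlgClosed K]
    {ρ : G →* Matrix n n K} (hρ : IsAbsolutelyIrreducible ρ) {x : G}
    (hx : (classSize x).Coprime (Fintype.card n)) :
    IsIntegral ℤ ((ρ x).trace / Fintype.card n) := by
  obtain ⟨ω, ω_isIntegral, hω⟩ := hρ.exists_isIntegral_card_mul_eq x
  obtain ⟨u, v, huv⟩ := Nat.isCoprime_iff_coprime.2 hx
  have huv' : (u : K) * classSize x + v * Fintype.card n = 1 := by exact_mod_cast huv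
  have div_eq : (ρ x).trace / Fintype.card n = u • ω + v • (ρ x).trace := by
    rw [div_eq_iff (by simp), zsmul_eq_mul, zsmul_eq_mul]
    linear_combination -(ρ x).trace * huv' - u * hω
  rw [div_eq]
  exact (ω_isIntegral.smul u).add
    ((isIntegral_trace_of_isOfFinOrder (ρ.isOfFinOrder (isOfFinOrder_of_finite x))).smul v)

lemma trace_eq_zero_or_mem_range_scalar {ρ : G →* Matrix n n ℂ} (hρ : IsAbsolutelyIrreducible ρ)
    {x : G} (hx : (classSize x).Coprime (Fintype.card n)) :
    (ρ x).trace = 0 ∨ ρ x ∈ Set.range (Matrix.scalar n) :=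
  or_iff_not_imp_left.2 <| mem_range_scalar_of_isIntegral_trace_div
    (ρ.isOfFinOrder (isOfFinOrder_of_finite x)) (hρ.isIntegral_trace_div_card hx)

end IsAbsolutelyIrreducible

/-! ### The regular representation -/

section LeftMultiplicationTrace

variable {R : Type*} [CommRing R]

lemma trace_mulLeft_matrix {n : Type*} [Fintype n] (M : Matrix n n R) :
    LinearMap.trace R _ (LinearMap.mulLeft R M) = Fintype.card n * M.trace := by
  classical
  have repr_apply (A : Matrix n n R) (i j : n) : (Matrix.stdBasis R n n).repr A (i, j) = A i j := by
    simp [Matrix.stdBasis]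
  rw [LinearMap.trace_eq_matrix_trace R (Matrix.stdBasis R n n), Matrix.trace,
    Fintype.sum_prod_type]
  simp [Algebra.leftMulMatrix_eq_repr_mul, Matrix.stdBasis_eq_single, Matrix.trace, repr_apply,
    Finset.mul_sum]

lemma trace_mulLeft_pi {ι : Type*} [Fintype ι] {A : ι → Type*} [∀ i, Ring (A i)]
    [∀ i, Algebra R (A i)] [∀ i, Module.Free R (A i)] [∀ i, Module.Finite R (A i)]
    (a : ∀ i, A i) :
    LinearMap.trace R _ (LinearMap.mulLeft R a) =
      ∑ i, LinearMap.trace R _ (LinearMap.mulLeft R (a i)) := by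
  classical
  let b (i : ι) := Module.Free.chooseBasis R (A i)
  rw [LinearMap.trace_eq_matrix_trace R (Pi.basis b), Matrix.trace, Fintype.sum_sigma]
  refine Finset.sum_congr rfl fun i _ ↦ ?_
  rw [LinearMap.trace_eq_matrix_trace R (b i), Matrix.trace]
  simp [Algebra.leftMulMatrix_eq_repr_mul]

lemma trace_mulLeft_algEquiv {A B : Type*} [Ring A] [Ring B] [Algebra R A] [Algebra R B]
    (e : A ≃ₐ[R] B) (a : A) :
    LinearMap.trace R _ (LinearMap.mulLeft R (e a)) =
      LinearMap.trace R _ (LinearMap.mulLeft R a) := by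
  rw [← LinearMap.trace_conj' _ e.toLinearEquiv]
  congr 1
  ext b
  simp [LinearEquiv.conj_apply]

lemma trace_mulLeft_monoidAlgebra {G : Type*} [Group G] [Finite G] (a : MonoidAlgebra R G) :
    LinearMap.trace R _ (LinearMap.mulLeft R a) = Nat.card G * a.coeff 1 := by
  classical
  cases nonempty_fintype G
  rw [LinearMap.trace_eq_matrix_trace R (MonoidAlgebra.basis G R), Matrix.trace]
  simp [Algebra.leftMulMatrix_eq_repr_mul, MonoidAlgebra.basis]

end LeftMultiplicationTrace

/-- The regular representation of `G` decomposes into the absolutely irreducible representations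
`ρ i`, each occurring with multiplicity equal to its degree. The decomposition itself is recorded
through characters: the regular character takes the value `|G|` at `1` and vanishes elsewhere. -/
structure IsRegularDecomposition {G ι R : Type*} [Monoid G] [CommSemiring R] [Fintype ι]
    {n : ι → Type*} [∀ i, Fintype (n i)] [∀ i, DecidableEq (n i)]
    (ρ : ∀ i, G →* Matrix (n i) (n i) R) : Prop where
  isAbsolutelyIrreducible (i : ι) : IsAbsolutelyIrreducible (ρ i)
  sum_card_mul_trace_one : ∑ i, Fintype.card (n i) * (ρ i 1).trace = Nat.card G
  sum_card_mul_trace_of_ne_one {g : G} (hg : g ≠ 1) :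
    ∑ i, Fintype.card (n i) * (ρ i g).trace = 0

theorem exists_isRegularDecomposition (G K : Type*) [Group G] [Finite G] [Field K] [IsAlgClosed K]
    [NeZero (Nat.card G : K)] :
    ∃ (m : ℕ) (d : Fin m → ℕ) (ρ : ∀ i, G →* Matrix (Fin (d i)) (Fin (d i)) K),
      (∀ i, NeZero (d i)) ∧ IsRegularDecomposition ρ := by
  obtain ⟨m, d, hd, ⟨e⟩⟩ :=
    IsSemisimpleRing.exists_algEquiv_pi_matrix_of_isAlgClosed K (MonoidAlgebra K G)
  let φ (i : Fin m) : MonoidAlgebra K G →ₐ[K] Matrix (Fin (d i)) (Fin (d i)) K :=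
    (Pi.evalAlgHom K _ i).comp e.toAlgHom
  let ρ (i : Fin m) : G →* Matrix (Fin (d i)) (Fin (d i)) K :=
    (MonoidAlgebra.lift K _ G).symm (φ i)
  have sum_eq (g : G) : ∑ i, Fintype.card (Fin (d i)) * (ρ i g).trace =
      Nat.card G * (MonoidAlgebra.single g (1 : K)).coeff 1 := by
    rw [← trace_mulLeft_monoidAlgebra, ← trace_mulLeft_algEquiv e, trace_mulLeft_pi]
    simp_rw [trace_mulLeft_matrix]
    rfl
  refine ⟨m, d, ρ, hd, ⟨fun i ↦ ?_, ?_, fun {g} hg ↦ ?_⟩⟩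
  · rw [IsAbsolutelyIrreducible, Equiv.apply_symm_apply]
    exact (Function.surjective_eval i).comp e.surjective
  · exact (sum_eq 1).trans (by simp)
  · exact (sum_eq g).trans (by simp [hg])

-- Sum the regular character over `G`: by Schur's lemma only the trivial constituents survive.
lemma IsRegularDecomposition.sum_sq_card_filter_eq_one {G ι K : Type*} [Group G] [Finite G]
    [Field K] [NeZero (Nat.card G : K)] [Fintype ι] {n : ι → Type*} [∀ i, Fintype (n i)]
    [∀ i, DecidableEq (n i)] {ρ : ∀ i, G →* Matrix (n i) (n i) K}
    [DecidablePred (ρ · = 1)] (hρ : IsRegularDecomposition ρ) :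
    ∑ i with ρ i = 1, (Fintype.card (n i) : K) ^ 2 = 1 := by
  cases nonempty_fintype G
  have sum_trace (i : ι) : ∑ g, (ρ i g).trace =
      if ρ i = 1 then (Nat.card G * Fintype.card (n i) : K) else 0 := by
    split_ifs with h
    · simp [h]
    · rw [← Matrix.trace_sum, (hρ.isAbsolutelyIrreducible i).sum_eq_zero h, Matrix.trace_zero]
  refine mul_left_cancel₀ (NeZero.ne (Nat.card G : K)) ?_
  calc (Nat.card G : K) * ∑ i with ρ i = 1, (Fintype.card (n i) : K) ^ 2
      = ∑ i, Fintype.card (n i) * ∑ g, (ρ i g).trace := by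
        simp_rw [sum_trace, mul_ite, mul_zero, Finset.mul_sum, ← Finset.sum_filter]
        exact Finset.sum_congr rfl fun i _ ↦ by ring
    _ = ∑ g, ∑ i, Fintype.card (n i) * (ρ i g).trace := by
        simp_rw [Finset.mul_sum]
        exact Finset.sum_comm
    _ = ∑ i, Fintype.card (n i) * (ρ i 1).trace :=
        Fintype.sum_eq_single 1 fun _ ↦ hρ.sum_card_mul_trace_of_ne_one
    _ = Nat.card G * 1 := by rw [hρ.sum_card_mul_trace_one, mul_one]

/-! ### Simple groups -/

section SimpleGroup

variable {G : Type*} [Group G] [IsSimpleGroup G]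

lemma finite_of_isSimpleGroup {H : Subgroup G} [H.FiniteIndex] (hH : H ≠ ⊤) : Finite G := by
  have normalCore_eq_bot : H.normalCore = ⊥ := H.normalCore_normal.eq_bot_or_eq_top.resolve_right
    fun h ↦ hH (top_le_iff.1 (h ▸ H.normalCore_le))
  have : (⊥ : Subgroup G).FiniteIndex := normalCore_eq_bot ▸ inferInstance
  exact Nat.finite_of_card_ne_zero (Subgroup.index_bot (G := G) ▸ this.index_ne_zero)

lemma injective_of_isSimpleGroup {M : Type*} [MulOneClass M] {f : G →* M} (hf : f ≠ 1) :
    Function.Injective f :=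
  (MonoidHom.ker_eq_bot_iff f).1 <| f.normal_ker.eq_bot_or_eq_top.resolve_right
    (hf <| MonoidHom.ker_eq_top_iff.1 ·)

variable {n : Type*} [Fintype n] [DecidableEq n]

lemma mem_center_of_mem_range_scalar {R : Type*} [CommSemiring R] {ρ : G →* Matrix n n R}
    (hne : ρ ≠ 1) {x : G} (hx : ρ x ∈ Set.range (Matrix.scalar n)) : x ∈ Subgroup.center G := by
  rw [← Matrix.center_eq_range, Semigroup.mem_center_iff] at hx
  refine Subgroup.mem_center_iff.2 fun g ↦ injective_of_isSimpleGroup hne ?_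
  rw [map_mul, map_mul, hx]

lemma IsAbsolutelyIrreducible.exists_isIntegral_card_mul_trace_eq [Finite G] [Nonempty n]
    {ρ : G →* Matrix n n ℂ} (hρ : IsAbsolutelyIrreducible ρ) (hne : ρ ≠ 1) {x : G}
    (hx : x ∉ Subgroup.center G) {p a : ℕ} (hp : p.Prime) (hclass : classSize x = p ^ a) :
    ∃ β : ℂ, IsIntegral ℤ β ∧ Fintype.card n * (ρ x).trace = p * β := by
  by_cases hpn : p ∣ Fintype.card n
  · obtain ⟨m, hm⟩ := hpn
    refine ⟨m • (ρ x).trace, ?_, by rw [hm, nsmul_eq_mul]; push_cast; ring⟩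
    exact (isIntegral_trace_of_isOfFinOrder (ρ.isOfFinOrder (isOfFinOrder_of_finite x))).smul m
  · have hcop : (classSize x).Coprime (Fintype.card n) :=
      hclass ▸ ((hp.coprime_iff_not_dvd).2 hpn).pow_left a
    have trace_eq_zero : (ρ x).trace = 0 :=
      (hρ.trace_eq_zero_or_mem_range_scalar hcop).resolve_right
        fun h ↦ hx (mem_center_of_mem_range_scalar hne h)
    exact ⟨0, isIntegral_zero, by rw [trace_eq_zero, mul_zero, mul_zero]⟩

lemma mem_center_of_classSize_eq_prime_pow [Finite G] {x : G} {p a : ℕ} (hp : p.Prime)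
    (hclass : classSize x = p ^ a) : x ∈ Subgroup.center G := by
  classical
  by_contra hx
  obtain ⟨m, d, ρ, hd, hρ⟩ := exists_isRegularDecomposition G ℂ
  have exists_multiple (i : Fin m) : ∃ β : ℂ, IsIntegral ℤ β ∧
      (ρ i ≠ 1 → Fintype.card (Fin (d i)) * (ρ i x).trace = p * β) := by
    by_cases hi : ρ i = 1
    · exact ⟨0, isIntegral_zero, absurd hi⟩
    · obtain ⟨β, hβ, h⟩ := (hρ.isAbsolutelyIrreducible i).exists_isIntegral_card_mul_trace_eq hi hx
        hp hclass
      exact ⟨β, hβ, fun _ ↦ h⟩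
  choose β β_isIntegral hβ using exists_multiple
  have one_add_eq_zero : (1 : ℂ) + p * ∑ i with ρ i ≠ 1, β i = 0 := by
    rw [← hρ.sum_card_mul_trace_of_ne_one (g := x) (by rintro rfl; exact hx (one_mem _)),
      ← Finset.sum_filter_add_sum_filter_not Finset.univ (ρ · = 1), Finset.mul_sum,
      ← hρ.sum_sq_card_filter_eq_one]
    congr 1 <;> refine Finset.sum_congr rfl fun i hi ↦ ?_
    · simp [(Finset.mem_filter.1 hi).2, sq]
    · exact (hβ i (Finset.mem_filter.1 hi).2).symm
  refine not_isIntegral_inv_natCast (K := ℂ) hp.one_lt ?_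
  have inv_eq : (p : ℂ)⁻¹ = -∑ i with ρ i ≠ 1, β i :=
    inv_eq_of_mul_eq_one_right (by linear_combination -one_add_eq_zero)
  rw [inv_eq]
  exact (IsIntegral.sum _ fun i _ ↦ β_isIntegral i).neg

end SimpleGroup

theorem burnside_prime_power_class_not_simple_general {G : Type*} [Group G]
    (hclass : ∃ (x : G) (p a : ℕ), p.Prime ∧ 1 ≤ a ∧ classSize x = p ^ a) :
    ¬ IsSimpleGroup G := by
  intro hsimple
  obtain ⟨x, p, a, hp, ha, hx⟩ := hclass
  have one_lt_classSize : 1 < classSize x := hx ▸ Nat.one_lt_pow (by omega) hp.one_lt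
  have : (Subgroup.centralizer {x}).FiniteIndex := ⟨by rw [classSize] at one_lt_classSize; omega⟩
  have : Finite G := finite_of_isSimpleGroup (H := Subgroup.centralizer {x}) fun h ↦ by
    rw [classSize, h, Subgroup.index_top] at one_lt_classSize
    omega
  exact one_lt_classSize.ne' (classSize_eq_one_of_mem_center
    (mem_center_of_classSize_eq_prime_pow hp hx))

/-- Burnside: a group of composite order having a conjugacy class of prime-power size `> 1`
cannot be simple. -/
theorem burnside_prime_power_class_not_simple {G : Type*} [Group G] [Finite G]
    (hcomp : Nat.card G ≠ 1 ∧ ¬ (Nat.card G).Prime)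
    (hclass : ∃ (x : G) (p a : ℕ), p.Prime ∧ 1 ≤ a ∧ classSize x = p ^ a) :
    ¬ IsSimpleGroup G :=
  burnside_prime_power_class_not_simple_general hclass
end
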